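/- arXiv:1506.08317 — 3 statements merged into one kernel-verified Lean document; each statement's English description precedes it below -/
import Mathlib

section
/- Let r ≥ 1 satisfy (3^k/(3^{k−1}+1))^r < 3, let l ≥ 1, and let J ∈ 𝒥_{l+1}. Then (1/|J|) ∫_J w_k^r dx = (1/3^{k−1}) Σ_{j=1}^∞ 3^{−j} (3^k/(3^{k−1}+1))^{(j+l)r}, where w_k(x) = Σ_{l=1}^∞ (3^k/(3^{k−1}+1))^l · χ_{Ω_l}(x). -/
open MeasureTheory Set Filter Topology
open scoped ENNReal

noncomputable section

namespace RT

/-- The Hilbert transform `Hf(x)`, defined as the principal-value limit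
`lim_{ε→0⁺} ∫_{|x-y|>ε} f(y)/(x-y) dy` (junk value at points where the limit
does not exist). -/
def Hil (f : ℝ → ℝ) (x : ℝ) : ℝ :=
  limUnder (𝓝[>] (0 : ℝ)) fun ε => ∫ y in {y : ℝ | ε < |x - y|}, f y / (x - y)

/-- The (uncentered) Hardy–Littlewood maximal function over bounded intervals:
`Mf(x) = sup_{I ∋ x} (1/|I|) ∫_I |f|`. -/
def HLMax (f : ℝ → ℝ) (x : ℝ) : ℝ≥0∞ :=
  ⨆ (a : ℝ) (b : ℝ) (_ : a < b) (_ : x ∈ Icc a b),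
    (ENNReal.ofReal (b - a))⁻¹ * ∫⁻ y in Ioo a b, ENNReal.ofReal |f y|

/-- `M_r f = (M(|f|^r))^{1/r}`. -/
def Mr (r : ℝ) (f : ℝ → ℝ) (x : ℝ) : ℝ≥0∞ :=
  HLMax (fun y => |f y| ^ r) x ^ (1 / r)

/-- The Orlicz maximal operator
`M_Φ f(x) = sup_{I ∋ x} inf {λ > 0 : (1/|I|) ∫_I Φ(|f|/λ) ≤ 1}`. -/
def MOrlicz (Φ : ℝ → ℝ) (f : ℝ → ℝ) (x : ℝ) : ℝ≥0∞ :=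
  ⨆ (a : ℝ) (b : ℝ) (_ : a < b) (_ : x ∈ Icc a b),
    sInf {lam : ℝ≥0∞ | ∃ l : ℝ, 0 < l ∧ lam = ENNReal.ofReal l ∧
      (∫⁻ y in Ioo a b, ENNReal.ofReal (Φ (|f y| / l))) ≤ ENNReal.ofReal (b - a)}

/-- The centered maximal operator with respect to a weight `v`:
`M^c_v h(x) = sup_{ρ>0} (1/v(B(x,ρ))) ∫_{B(x,ρ)} |h| v`. -/
def Mc (v h : ℝ → ℝ) (x : ℝ) : ℝ≥0∞ :=
  ⨆ (ρ : ℝ) (_ : 0 < ρ),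
    (∫⁻ y in Ioo (x - ρ) (x + ρ), ENNReal.ofReal (v y))⁻¹ *
      ∫⁻ y in Ioo (x - ρ) (x + ρ), ENNReal.ofReal |h y| * ENNReal.ofReal (v y)

/-- A Young function: convex, increasing, `Φ(0) = 0`, `Φ(t)/t → ∞`. -/
structure IsYoung (Φ : ℝ → ℝ) : Prop where
  convexOn : ConvexOn ℝ (Ici 0) Φ
  mono : MonotoneOn Φ (Ici 0)
  map_zero : Φ 0 = 0
  superlinear : Tendsto (fun t => Φ t / t) atTop atTop

/-- A weight: a nonnegative locally integrable function on `ℝ`. -/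
def IsWeight (w : ℝ → ℝ) : Prop :=
  (∀ x, 0 ≤ w x) ∧ LocallyIntegrable w volume

/-! Triadic machinery: intervals are represented by their endpoint pairs,
`(a, b)` corresponding to `[a, b)`. -/

/-- The length of the interval. -/
def len (I : ℝ × ℝ) : ℝ := I.2 - I.1

/-- The set `[a, b)` of the interval `I = (a, b)`. -/
def ivl (I : ℝ × ℝ) : Set ℝ := Ico I.1 I.2

/-- A triadic interval `[3^j n, 3^j (n+1))`, `j, n ∈ ℤ`. -/
def IsTriadic (I : ℝ × ℝ) : Prop :=
  ∃ j n : ℤ, I.1 = (3 : ℝ) ^ j * n ∧ I.2 = (3 : ℝ) ^ j * (n + 1)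

/-- The middle third `I^Δ` of `I`: same center, one third of the length. -/
def mid (I : ℝ × ℝ) : ℝ × ℝ := (I.1 + (I.2 - I.1) / 3, I.2 - (I.2 - I.1) / 3)

/-- `P` assigns to each triadic interval `J ⊆ [0,1)` a triadic interval
adjacent to `J^Δ` (on its left or on its right) with `|P J| = 3^{-k} |J|`. -/
def GoodP (k : ℕ) (P : ℝ × ℝ → ℝ × ℝ) : Prop :=
  ∀ J : ℝ × ℝ, IsTriadic J → ivl J ⊆ Ico (0 : ℝ) 1 →
    IsTriadic (P J) ∧ len (P J) = len J / 3 ^ k ∧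
      ((P J).2 = (mid J).1 ∨ (P J).1 = (mid J).2)

/-- The families `𝒥_l`: `𝒥_1 = {[0,1)}`, and `𝒥_{l+1}` consists of the `3^{k-1}`
triadic subintervals of `J^Δ` of length `|J|/3^k`, for each `J ∈ 𝒥_l`.
(`𝒥_0` is empty.) -/
def Jfam (k : ℕ) : ℕ → Set (ℝ × ℝ)
  | 0 => ∅
  | 1 => {((0 : ℝ), (1 : ℝ))}
  | l + 2 => {J' | IsTriadic J' ∧ ∃ J ∈ Jfam k (l + 1),
      len J' = len J / 3 ^ k ∧ ivl J' ⊆ ivl (mid J)}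

/-- The families `ℐ_l = {P J : J ∈ 𝒥_l}`. -/
def Ifam (k : ℕ) (P : ℝ × ℝ → ℝ × ℝ) (l : ℕ) : Set (ℝ × ℝ) :=
  P '' Jfam k l

/-- `Ω_l = ⋃_{I ∈ ℐ_l} I`. -/
def Omega (k : ℕ) (P : ℝ × ℝ → ℝ × ℝ) (l : ℕ) : Set ℝ :=
  ⋃ I ∈ Ifam k P l, ivl I

/-- The constant `3^k / (3^{k-1} + 1)`. -/
def alpha (k : ℕ) : ℝ := 3 ^ k / (3 ^ (k - 1) + 1)

/-- The Reguera–Thiele weight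
`w_k = ∑_{l=1}^∞ (3^k/(3^{k-1}+1))^l χ_{Ω_l}`. -/
def wk (k : ℕ) (P : ℝ × ℝ → ℝ × ℝ) (x : ℝ) : ℝ :=
  ∑' l : ℕ, alpha k ^ (l + 1) * (Omega k P (l + 1)).indicator (fun _ => (1 : ℝ)) x

/-- The triadic interval `[n/3^N, (n+1)/3^N)`. -/
def TT (N : ℕ) (n : ℤ) : ℝ × ℝ := ((n : ℝ) / 3 ^ N, ((n : ℝ) + 1) / 3 ^ N)

lemma TT_triadic (N : ℕ) (n : ℤ) : IsTriadic (TT N n) := by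
  refine ⟨-(N : ℤ), n, ?_, ?_⟩
  · simp only [TT, zpow_neg, zpow_natCast]; field_simp
  · simp only [TT, zpow_neg, zpow_natCast]; field_simp

lemma TT_len (N : ℕ) (n : ℤ) : len (TT N n) = 1 / 3 ^ N := by
  simp only [TT, len]; ring

lemma TT_of {I : ℝ × ℝ} (hI : IsTriadic I) {N : ℕ} (h : len I = 1 / 3 ^ N) :
    ∃ n : ℤ, I = TT N n := by
  obtain ⟨j, n, h1, h2⟩ := hI
  have h3 : (3 : ℝ) ^ j = 1 / 3 ^ N := by
    rw [← h, len, h1, h2]; ring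
  refine ⟨n, Prod.ext ?_ ?_⟩
  · rw [h1, h3]; simp only [TT]; ring
  · rw [h2, h3]; simp only [TT]; ring

lemma TT_mem {N : ℕ} {n : ℤ} {x : ℝ} : x ∈ ivl (TT N n) ↔ ⌊x * 3 ^ N⌋ = n := by
  have h : (0 : ℝ) < 3 ^ N := by positivity
  simp only [ivl, TT, mem_Ico, Int.floor_eq_iff, div_le_iff₀ h, lt_div_iff₀ h]

lemma Jform (k : ℕ) (m : ℕ) : ∀ J ∈ Jfam k (m + 1),
    IsTriadic J ∧ len J = 1 / 3 ^ (k * m) ∧ ivl J ⊆ Ico (0 : ℝ) 1 := by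
  induction m with
  | zero =>
    intro J hJ
    simp only [Jfam, mem_singleton_iff, zero_add] at hJ
    subst hJ
    refine ⟨⟨0, 0, by simp, by simp⟩, by simp [len], by simp [ivl]⟩
  | succ m ih =>
    rintro J ⟨hT, J', hJ', hl, hs⟩
    obtain ⟨h1, h2, h3⟩ := ih J' hJ'
    refine ⟨hT, ?_, hs.trans (Subset.trans ?_ h3)⟩
    · rw [hl, h2]; rw [mul_add, pow_add]; field_simp; simp
    · have : 0 ≤ len J' := by rw [h2]; positivity
      simp only [len] at this
      apply Ico_subset_Ico <;> simp only [mid] <;> linarith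

lemma Jform' {k m : ℕ} {J : ℝ × ℝ} (hJ : J ∈ Jfam k (m + 1)) : ∃ n : ℤ, J = TT (k * m) n :=
  TT_of (Jform k m J hJ).1 (Jform k m J hJ).2.1

lemma Jlen_pos {k m : ℕ} {J : ℝ × ℝ} (hJ : J ∈ Jfam k (m + 1)) : 0 < len J := by
  rw [(Jform k m J hJ).2.1]; positivity

lemma mid_subset {k m : ℕ} {J : ℝ × ℝ} (hJ : J ∈ Jfam k (m + 1)) : ivl (mid J) ⊆ ivl J := by
  have := Jlen_pos hJ
  simp only [len] at this
  apply Ico_subset_Ico <;> simp only [mid] <;> linarith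

lemma Junique {k m : ℕ} {J J' : ℝ × ℝ} (hJ : J ∈ Jfam k (m + 1)) (hJ' : J' ∈ Jfam k (m + 1))
    {x : ℝ} (hx : x ∈ ivl J) (hx' : x ∈ ivl J') : J = J' := by
  obtain ⟨n, rfl⟩ := Jform' hJ
  obtain ⟨n', rfl⟩ := Jform' hJ'
  rw [TT_mem] at hx hx'
  rw [← hx, ← hx']

/-- Union of the intervals of the family. -/
def EE (k m : ℕ) : Set ℝ := ⋃ J ∈ Jfam k m, ivl J

lemma EE_succ (k m : ℕ) : EE k (m + 2) ⊆ EE k (m + 1) := by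
  intro x hx
  simp only [EE, mem_iUnion] at hx ⊢
  obtain ⟨J, ⟨hT, J', hJ', hl, hs⟩, hx⟩ := hx
  exact ⟨J', hJ', mid_subset hJ' (hs hx)⟩

lemma EE_anti (k m i : ℕ) : EE k (m + i + 1) ⊆ EE k (m + 1) := by
  induction i with
  | zero => exact subset_rfl
  | succ i ih => exact (EE_succ k (m + i)).trans ih

lemma PJ_subset {k : ℕ} (hk : 2 ≤ k) {P : ℝ × ℝ → ℝ × ℝ} (hP : GoodP k P) {m : ℕ} {J : ℝ × ℝ}
    (hJ : J ∈ Jfam k (m + 1)) : ivl (P J) ⊆ ivl J ∧ Disjoint (ivl (P J)) (ivl (mid J)) := by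
  obtain ⟨h1, h2, h3⟩ := Jform k m J hJ
  obtain ⟨_, hl, ha⟩ := hP J h1 h3
  have hpos := Jlen_pos hJ
  have h9 : (3 : ℝ) ≤ 3 ^ k := by
    calc (3 : ℝ) = 3 ^ 1 := by norm_num
      _ ≤ 3 ^ k := pow_le_pow_right₀ (by norm_num) (by omega)
  have hle : len (P J) ≤ len J / 3 := by
    rw [hl]; gcongr
  have hp : 0 < len (P J) := by rw [hl]; positivity
  simp only [len, mid] at *
  constructor
  · apply Ico_subset_Ico <;> rcases ha with ha | ha <;> linarith
  · rw [Set.disjoint_left]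
    intro x hx hx'
    simp only [ivl, mem_Ico] at hx hx'
    rcases ha with ha | ha <;> linarith

lemma Omega_mem {k : ℕ} {P : ℝ × ℝ → ℝ × ℝ} {m : ℕ} {x : ℝ} :
    x ∈ Omega k P m ↔ ∃ J ∈ Jfam k m, x ∈ ivl (P J) := by
  simp only [Omega, Ifam, mem_iUnion, exists_prop, exists_mem_image]

lemma Omega_subset {k : ℕ} (hk : 2 ≤ k) {P : ℝ × ℝ → ℝ × ℝ} (hP : GoodP k P) (m : ℕ) :
    Omega k P (m + 1) ⊆ EE k (m + 1) := by
  intro x hx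
  obtain ⟨J, hJ, hx⟩ := Omega_mem.1 hx
  simp only [EE, mem_iUnion]
  exact ⟨J, hJ, (PJ_subset hk hP hJ).1 hx⟩

lemma Omega_disj_EE {k : ℕ} (hk : 2 ≤ k) {P : ℝ × ℝ → ℝ × ℝ} (hP : GoodP k P) (m : ℕ) :
    Disjoint (Omega k P (m + 1)) (EE k (m + 2)) := by
  rw [Set.disjoint_left]
  intro x hx hx'
  obtain ⟨J, hJ, hx⟩ := Omega_mem.1 hx
  simp only [EE, mem_iUnion] at hx'
  obtain ⟨J', ⟨hT, J'', hJ'', hl, hs⟩, hx'⟩ := hx'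
  have hs' := hs hx'
  have := Junique hJ hJ'' ((PJ_subset hk hP hJ).1 hx) (mid_subset hJ'' hs')
  subst this
  exact Set.disjoint_left.1 (PJ_subset hk hP hJ).2 hx hs'

lemma Omega_disj {k : ℕ} (hk : 2 ≤ k) {P : ℝ × ℝ → ℝ × ℝ} (hP : GoodP k P) {m m' : ℕ}
    (h : m < m') {x : ℝ} (hx : x ∈ Omega k P (m + 1)) : x ∉ EE k (m' + 1) := by
  obtain ⟨i, rfl⟩ := Nat.exists_eq_add_of_lt h
  intro hx'
  refine Set.disjoint_left.1 (Omega_disj_EE hk hP m) hx (EE_anti k (m + 1) i ?_)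
  convert hx' using 2; ring

lemma Omega_unique {k : ℕ} (hk : 2 ≤ k) {P : ℝ × ℝ → ℝ × ℝ} (hP : GoodP k P) {m m' : ℕ}
    {x : ℝ} (hx : x ∈ Omega k P (m + 1)) (hx' : x ∈ Omega k P (m' + 1)) : m = m' := by
  rcases lt_trichotomy m m' with h | h | h
  · exact absurd (Omega_subset hk hP _ hx') (Omega_disj hk hP h hx)
  · exact h
  · exact absurd (Omega_subset hk hP _ hx) (Omega_disj hk hP h hx')

lemma Omega_meas (k : ℕ) (P : ℝ × ℝ → ℝ × ℝ) (m : ℕ) : MeasurableSet (Omega k P (m + 1)) := by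
  have hc : (Jfam k (m + 1)).Countable := by
    refine (Set.countable_range (TT (k * m))).mono ?_
    intro J hJ
    obtain ⟨n, rfl⟩ := Jform' hJ
    exact ⟨n, rfl⟩
  refine MeasurableSet.biUnion (hc.image P) fun I _ => measurableSet_Ico

lemma vol_ivl {I : ℝ × ℝ} (h : 0 ≤ len I) : volume.real (ivl I) = len I := by
  simp only [len] at h
  simp only [ivl, len]
  rw [Real.volume_real_Ico_of_le (by linarith)]

lemma Omega_inter {k : ℕ} (hk : 2 ≤ k) {P : ℝ × ℝ → ℝ × ℝ} (hP : GoodP k P) {m : ℕ} {J : ℝ × ℝ}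
    (hJ : J ∈ Jfam k (m + 1)) : Omega k P (m + 1) ∩ ivl J = ivl (P J) := by
  ext x
  constructor
  · rintro ⟨hx, hx'⟩
    obtain ⟨J', hJ', hx⟩ := Omega_mem.1 hx
    rwa [Junique hJ hJ' hx' ((PJ_subset hk hP hJ').1 hx)]
  · intro hx
    exact ⟨Omega_mem.2 ⟨J, hJ, hx⟩, (PJ_subset hk hP hJ).1 hx⟩

lemma child_iff {k : ℕ} (hk : 2 ≤ k) (N : ℕ) (n n' : ℤ) :
    ivl (TT (N + k) n') ⊆ ivl (mid (TT N n)) ↔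
      n' ∈ Finset.Ico (3 ^ k * n + 3 ^ (k - 1)) (3 ^ k * n + 2 * 3 ^ (k - 1)) := by
  obtain ⟨q, rfl⟩ : ∃ q, k = q + 1 := ⟨k - 1, by omega⟩
  have hN : (0 : ℝ) < 3 ^ N := by positivity
  have hq : (0 : ℝ) < 3 ^ q := by positivity
  have hlt : (TT (N + (q + 1)) n').1 < (TT (N + (q + 1)) n').2 := by
    have := TT_len (N + (q + 1)) n'
    have h2 : (0 : ℝ) < 1 / 3 ^ (N + (q + 1)) := by positivity
    rw [← this, len] at h2
    linarith
  rw [ivl, ivl, Ico_subset_Ico_iff hlt, Finset.mem_Ico]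
  simp only [TT, mid, Nat.add_sub_cancel]
  have e1 : (n : ℝ) / 3 ^ N + (((n : ℝ) + 1) / 3 ^ N - n / 3 ^ N) / 3
      = (3 ^ (q + 1) * n + 3 ^ q) / 3 ^ (N + (q + 1)) := by
    rw [pow_add, pow_succ]; field_simp; ring
  have e2 : ((n : ℝ) + 1) / 3 ^ N - (((n : ℝ) + 1) / 3 ^ N - n / 3 ^ N) / 3
      = (3 ^ (q + 1) * n + 2 * 3 ^ q) / 3 ^ (N + (q + 1)) := by
    rw [pow_add, pow_succ]; field_simp; ring
  rw [e1, e2, div_le_div_iff_of_pos_right (by positivity),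
    div_le_div_iff_of_pos_right (by positivity)]
  rw [← Int.add_one_le_iff]
  constructor
  · rintro ⟨h1, h2⟩; exact ⟨by exact_mod_cast h1, by exact_mod_cast h2⟩
  · rintro ⟨h1, h2⟩; exact ⟨by exact_mod_cast h1, by exact_mod_cast h2⟩

lemma Omega_vol {k : ℕ} (hk : 2 ≤ k) {P : ℝ × ℝ → ℝ × ℝ} (hP : GoodP k P) (i : ℕ) :
    ∀ (m : ℕ) (J : ℝ × ℝ), J ∈ Jfam k (m + 1) →
      volume.real (Omega k P (m + i + 1) ∩ ivl J) = len J / 3 ^ (k + i) := by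
  induction i with
  | zero =>
    intro m J hJ
    have h := Jform k m J hJ
    have hl := (hP J h.1 h.2.2).2.1
    have hpos := Jlen_pos hJ
    rw [add_zero, Omega_inter hk hP hJ, vol_ivl (by rw [hl]; positivity), hl, add_zero]
  | succ i ih =>
    intro m J hJ
    obtain ⟨n, hn⟩ := Jform' hJ
    set s : Finset ℤ := Finset.Ico (3 ^ k * n + 3 ^ (k - 1)) (3 ^ k * n + 2 * 3 ^ (k - 1)) with hs
    have hchild : ∀ n' ∈ s, TT (k * m + k) n' ∈ Jfam k (m + 1 + 1) := by
      intro n' hn'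
      refine ⟨TT_triadic _ _, J, hJ, ?_, ?_⟩
      · rw [hn, TT_len, TT_len, pow_add]; field_simp
      · rw [hn]; exact (child_iff hk _ _ _).2 hn'
    have hEq : Omega k P (m + (i + 1) + 1) ∩ ivl J
        = ⋃ n' ∈ s, (Omega k P (m + 1 + i + 1) ∩ ivl (TT (k * m + k) n')) := by
      have e : m + (i + 1) + 1 = m + 1 + i + 1 := by ring
      rw [e]
      ext x
      simp only [mem_iUnion]
      constructor
      · rintro ⟨hx, hxJ⟩
        have h2 := EE_anti k (m + 1) i (Omega_subset hk hP _ hx)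
        simp only [EE, mem_iUnion] at h2
        obtain ⟨J', hJ', hxJ'⟩ := h2
        obtain ⟨n', hn'⟩ := Jform' hJ'
        obtain ⟨hT, J'', hJ'', hl, hsub⟩ := hJ'
        have hJJ := Junique hJ hJ'' hxJ (mid_subset hJ'' (hsub hxJ'))
        subst hJJ
        rw [mul_add, mul_one] at hn'
        subst hn'
        rw [hn] at hsub
        exact ⟨n', (child_iff hk _ _ _).1 hsub, hx, hxJ'⟩
      · rintro ⟨n', hn', hx, hx'⟩
        refine ⟨hx, mid_subset hJ ?_⟩
        rw [hn]
        exact (child_iff hk _ _ _).2 hn' hx'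
    have hfin : ∀ b ∈ s, volume (Omega k P (m + 1 + i + 1) ∩ ivl (TT (k * m + k) b)) ≠ ⊤ := by
      intro b _
      exact ((measure_mono inter_subset_right).trans_lt measure_Ico_lt_top).ne
    rw [hEq, measureReal_biUnion_finset (h := hfin)]
    · rw [Finset.sum_congr rfl fun n' hn' => ih (m + 1) _ (hchild n' hn')]
      have hcard : (s.card : ℝ) = 3 ^ (k - 1) := by
        rw [hs, Int.card_Ico]
        have : (3 ^ k * n + 2 * 3 ^ (k - 1) - (3 ^ k * n + 3 ^ (k - 1)) : ℤ)
          = ((3 ^ (k - 1) : ℕ) : ℤ) := by push_cast; ring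
        rw [this, Int.toNat_natCast]; push_cast; rfl
      simp only [TT_len, Finset.sum_const, nsmul_eq_mul, hcard, hn]
      obtain ⟨q, rfl⟩ : ∃ q, k = q + 1 := ⟨k - 1, by omega⟩
      simp only [Nat.add_sub_cancel, pow_add]
      field_simp
    · intro a _ b _ hab
      simp only [Function.onFun]
      rw [Set.disjoint_left]
      rintro x ⟨_, hx⟩ ⟨_, hx'⟩
      rw [TT_mem] at hx hx'
      exact hab (hx.symm.trans hx')
    · intro b _
      exact (Omega_meas k P _).inter measurableSet_Ico

lemma alpha_pos (k : ℕ) : 0 < alpha k := by unfold alpha; positivity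

lemma wk_rpow {k : ℕ} (hk : 2 ≤ k) {P : ℝ × ℝ → ℝ × ℝ} (hP : GoodP k P) {r : ℝ} (hr : 1 ≤ r)
    (x : ℝ) : wk k P x ^ r = ∑' m : ℕ, (Omega k P (m + 1)).indicator
      (fun _ => alpha k ^ (((m + 1 : ℕ) : ℝ) * r)) x := by
  unfold wk
  by_cases h : ∃ m, x ∈ Omega k P (m + 1)
  · obtain ⟨m, hm⟩ := h
    have hne : ∀ m', m' ≠ m → x ∉ Omega k P (m' + 1) := fun m' h1 h2 =>
      h1 (Omega_unique hk hP h2 hm)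
    rw [tsum_eq_single m (fun m' h => by simp [hne m' h]),
      tsum_eq_single m (fun m' h => by simp [hne m' h])]
    rw [indicator_of_mem hm, indicator_of_mem hm, mul_one,
      Real.rpow_mul (alpha_pos k).le, Real.rpow_natCast]
  · push Not at h
    simp only [indicator_of_notMem (h _), mul_zero, tsum_zero]
    exact Real.zero_rpow (by linarith)

/-- For `r ≥ 1` with `(3^k/(3^{k-1}+1))^r < 3`, `l ≥ 1`, and
`J ∈ 𝒥_{l+1}`, one has
`(1/|J|) ∫_J w_k^r = (1/3^{k-1}) ∑_{j=1}^∞ 3^{-j} (3^k/(3^{k-1}+1))^{(j+l) r}`. -/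
theorem statement5 (k : ℕ) (hk : 2 ≤ k) (P : ℝ × ℝ → ℝ × ℝ) (hP : GoodP k P)
    (r : ℝ) (hr : 1 ≤ r) (hr3 : alpha k ^ r < 3)
    (l : ℕ) (hl : 1 ≤ l) (J : ℝ × ℝ) (hJ : J ∈ Jfam k (l + 1)) :
    (len J)⁻¹ * ∫ x in ivl J, wk k P x ^ r
      = (1 / (3:ℝ) ^ (k - 1)) *
        ∑' j : ℕ, ((1:ℝ) / 3) ^ (j + 1) *
          alpha k ^ ((((j + 1 + l : ℕ) : ℝ)) * r) := by
  have hpos := Jlen_pos hJ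
  have hα := alpha_pos k
  set c : ℕ → ℝ := fun m => alpha k ^ (((m + 1 : ℕ) : ℝ) * r) with hc
  have hc0 : ∀ m, 0 ≤ c m := fun m => Real.rpow_nonneg hα.le _
  have hfin : ∀ m, (volume.restrict (ivl J)) (Omega k P (m + 1)) ≠ ⊤ := fun m =>
    ((measure_mono (subset_univ _)).trans_lt
      (by rw [Measure.restrict_apply_univ]; exact measure_Ico_lt_top)).ne
  have hint : ∀ m, ∫ x in ivl J, (Omega k P (m + 1)).indicator (fun _ => c m) x
      = c m * volume.real (Omega k P (m + 1) ∩ ivl J) := by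
    intro m
    rw [integral_indicator_const _ (Omega_meas k P m),
      measureReal_restrict_apply (Omega_meas k P m), smul_eq_mul, mul_comm]
  have hlow : ∀ m < l, volume.real (Omega k P (m + 1) ∩ ivl J) = 0 := by
    intro m hm
    have : Omega k P (m + 1) ∩ ivl J = ∅ := by
      ext x
      simp only [mem_inter_iff, mem_empty_iff_false, iff_false, not_and]
      intro hx hxJ
      exact Omega_disj hk hP hm hx (by simp only [EE, mem_iUnion]; exact ⟨J, hJ, hxJ⟩)
    rw [this]; simp
  have hhigh : ∀ j, c (j + l) * volume.real (Omega k P (j + l + 1) ∩ ivl J)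
      = len J * ((1 / (3:ℝ) ^ (k - 1)) * (((1:ℝ) / 3) ^ (j + 1) *
          alpha k ^ ((((j + 1 + l : ℕ) : ℝ)) * r))) := by
    intro j
    rw [add_comm j l, Omega_vol hk hP j l J hJ, hc]
    have e : l + j + 1 = j + 1 + l := by ring
    simp only [e]
    obtain ⟨q, rfl⟩ : ∃ q, k = q + 1 := ⟨k - 1, by omega⟩
    simp only [Nat.add_sub_cancel, pow_add, div_pow, one_pow]
    field_simp
  have hsumm : Summable fun j : ℕ => ((1:ℝ) / 3) ^ (j + 1) *
          alpha k ^ ((((j + 1 + l : ℕ) : ℝ)) * r) := by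
    have hg : Summable fun j : ℕ => (alpha k ^ r / 3) ^ j :=
      summable_geometric_of_lt_one (by positivity) (by linarith)
    refine (hg.mul_left ((1 / 3) * (alpha k ^ r) ^ (1 + l))).congr fun j => ?_
    rw [mul_comm ((j + 1 + l : ℕ) : ℝ) r, Real.rpow_mul hα.le, Real.rpow_natCast]
    simp only [pow_add, div_pow, one_pow]
    field_simp
  have hsumm2 : Summable fun m => c m * volume.real (Omega k P (m + 1) ∩ ivl J) := by
    rw [← summable_nat_add_iff l]
    refine ((hsumm.mul_left (1 / (3:ℝ) ^ (k - 1))).mul_left (len J)).congr fun j => ?_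
    exact (hhigh j).symm
  have key : ∫ x in ivl J, wk k P x ^ r
      = ∑' m, c m * volume.real (Omega k P (m + 1) ∩ ivl J) := by
    simp only [wk_rpow hk hP hr]
    rw [← integral_tsum_of_summable_integral_norm]
    · exact tsum_congr hint
    · intro m
      exact (integrable_indicator_iff (Omega_meas k P m)).2 (integrableOn_const (hfin m))
    · refine hsumm2.congr fun m => ?_
      rw [← hint]
      refine integral_congr_ae (Eventually.of_forall fun x => ?_)
      exact (Real.norm_of_nonneg (indicator_nonneg (fun _ _ => hc0 m) x)).symm
  rw [key, ← hsumm2.sum_add_tsum_nat_add l,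
    Finset.sum_eq_zero fun m hm => by rw [hlow m (Finset.mem_range.1 hm), mul_zero], zero_add]
  simp only [hhigh]
  rw [tsum_mul_left, tsum_mul_left, inv_mul_cancel_left₀ hpos.ne']

end RT

end
end

section
/- For every integer k ≥ 1, one has (3^k/(3^{k−1}+1))^{1 + 1/3^{k+1}} ≤ 3 − 2/(3^{k−1}+1). In particular, 3^{1/3^{k+1}} · 3^k/(3^{k−1}+1) ≤ (1 + 1/3^k) · 3^k/(3^{k−1}+1) = 3 − 2/(3^{k−1}+1). -/
open MeasureTheory Set Filter Topology
open scoped ENNReal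

noncomputable section

namespace RT

/-- For every integer `k ≥ 1`,
`(3^k/(3^{k-1}+1))^{1+1/3^{k+1}} ≤ 3 − 2/(3^{k-1}+1)`; in particular
`3^{1/3^{k+1}} · 3^k/(3^{k-1}+1) ≤ (1 + 1/3^k) · 3^k/(3^{k-1}+1)
  = 3 − 2/(3^{k-1}+1)`. -/
theorem statement6 (k : ℕ) (hk : 1 ≤ k) :
    ((3:ℝ) ^ k / ((3:ℝ) ^ (k - 1) + 1)) ^ ((1:ℝ) + 1 / (3:ℝ) ^ (k + 1))
        ≤ 3 - 2 / ((3:ℝ) ^ (k - 1) + 1) ∧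
      (3:ℝ) ^ ((1:ℝ) / (3:ℝ) ^ (k + 1)) * ((3:ℝ) ^ k / ((3:ℝ) ^ (k - 1) + 1))
        ≤ (1 + 1 / (3:ℝ) ^ k) * ((3:ℝ) ^ k / ((3:ℝ) ^ (k - 1) + 1)) ∧
      (1 + 1 / (3:ℝ) ^ k) * ((3:ℝ) ^ k / ((3:ℝ) ^ (k - 1) + 1))
        = 3 - 2 / ((3:ℝ) ^ (k - 1) + 1) := by
  obtain ⟨n, rfl⟩ : ∃ n, k = n + 1 := ⟨k - 1, by omega⟩
  simp only [Nat.add_sub_cancel]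
  have hm : (0:ℝ) < 3 ^ n := by positivity
  have hm1 : (1:ℝ) ≤ 3 ^ n := one_le_pow₀ (by norm_num)
  have e1 : (3:ℝ) ^ (n + 1) = 3 * 3 ^ n := by ring
  have e2 : (3:ℝ) ^ (n + 1 + 1) = 9 * 3 ^ n := by ring
  rw [e1, e2]
  generalize (3:ℝ) ^ n = m at *
  have hA : (0:ℝ) < 3 * m / (m + 1) := by positivity
  have hA3 : 3 * m / (m + 1) ≤ 3 := by
    rw [div_le_iff₀ (by positivity)]; linarith
  have hp : (0:ℝ) ≤ 1 / (9 * m) := by positivity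
  have hp1 : 1 / (9 * m) ≤ 1 := by
    rw [div_le_iff₀ (by positivity)]; linarith
  have hB : (3:ℝ) ^ (1 / (9 * m)) ≤ 1 + 1 / (3 * m) := by
    have h := rpow_one_add_le_one_add_mul_self (s := 2) (by norm_num) hp hp1
    have h3 : (1:ℝ) + 2 = 3 := by norm_num
    rw [h3] at h
    have h4 : 1 / (3 * m) = 1 / (9 * m) * 3 := by field_simp; norm_num
    rw [h4]; linarith
  have hE : (1 + 1 / (3 * m)) * (3 * m / (m + 1)) = 3 - 2 / (m + 1) := by
    field_simp; ring
  have hM : (3:ℝ) ^ (1 / (9 * m)) * (3 * m / (m + 1))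
      ≤ (1 + 1 / (3 * m)) * (3 * m / (m + 1)) :=
    mul_le_mul_of_nonneg_right hB hA.le
  refine ⟨?_, hM, hE⟩
  rw [Real.rpow_add hA, Real.rpow_one, mul_comm, ← hE]
  exact (mul_le_mul_of_nonneg_right (Real.rpow_le_rpow hA.le hA3 hp) hA.le).trans hM

end RT

end
end

section
/- Let 1 < r < 2 and A_r > 0, and assume that for every weight w and every f with ∫_ℝ |f| M_r w dx < ∞ one has sup_{λ>0} λ·w({x : |Hf(x)| > λ}) ≤ A_r ∫_ℝ |f| M_r w dx. Let α_r = r/(2−r). Then there is an absolute constant c > 0 (independent of r) such that for any weight w supported in [0,1]: ∫_0^1 (|Hw(x)|/(M_{α_r}w(x))^{α_r/r})² · w(x)^{α_r} dx ≤ c·A_r² ∫_0^1 w dx. -/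
open MeasureTheory Set Filter Topology
open scoped ENNReal

noncomputable section

namespace RT

/-- uncentered maximal quotient of two measures over open intervals -/
def NM (μ ν : Measure ℝ) (x : ℝ) : ℝ≥0∞ :=
  ⨆ (a : ℝ) (b : ℝ) (_ : x ∈ Ioo a b), μ (Ioo a b) / ν (Ioo a b)

lemma cover_finset (n : ℕ) : ∀ s : Finset (ℝ × ℝ), s.card = n →
    ∃ s' ⊆ s, (⋃ p ∈ s, Ioo p.1 p.2) ⊆ (⋃ p ∈ s', Ioo p.1 p.2) ∧
      ∀ x : ℝ, (s'.filter (fun p => x ∈ Ioo p.1 p.2)).card ≤ 2 := by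
  classical
  induction n using Nat.strong_induction_on with
  | _ n ih =>
  intro s hs
  by_cases h : ∀ x : ℝ, (s.filter (fun p => x ∈ Ioo p.1 p.2)).card ≤ 2
  · exact ⟨s, Finset.Subset.refl _, Subset.rfl, h⟩
  push Not at h
  obtain ⟨x, hx⟩ := h
  set t := s.filter (fun p => x ∈ Ioo p.1 p.2) with ht
  have hne : t.Nonempty := by
    rw [← Finset.card_pos]; omega
  obtain ⟨I, hI, hImin⟩ := Finset.exists_min_image t (fun p => p.1) hne
  obtain ⟨J, hJ, hJmax⟩ := Finset.exists_max_image t (fun p => p.2) hne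
  have h3 : ∃ K ∈ t, K ≠ I ∧ K ≠ J := by
    by_contra hcon
    push Not at hcon
    have : t ⊆ {I, J} := by
      intro K hK
      by_cases hKI : K = I
      · simp [hKI]
      · simp [hcon K hK hKI]
    have := Finset.card_le_card this
    have h2 : ({I, J} : Finset (ℝ × ℝ)).card ≤ 2 := Finset.card_le_two
    omega
  obtain ⟨K, hK, hKI, hKJ⟩ := h3
  have hmem : ∀ p ∈ t, p ∈ s ∧ x ∈ Ioo p.1 p.2 := fun p hp => by
    simpa [ht] using hp
  have hcard : (s.erase K).card < n := by
    rw [← hs]; exact Finset.card_erase_lt_of_mem (hmem K hK).1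
  obtain ⟨s', hs', hcov, hov⟩ := ih _ hcard (s.erase K) rfl
  refine ⟨s', hs'.trans (Finset.erase_subset _ _), ?_, hov⟩
  refine Subset.trans ?_ hcov
  intro y hy
  simp only [mem_iUnion] at hy ⊢
  obtain ⟨p, hp, hyp⟩ := hy
  by_cases hpK : p = K
  · subst hpK
    rcases le_total y x with hyx | hyx
    · refine ⟨I, Finset.mem_erase.2 ⟨hKI.symm, (hmem I hI).1⟩, ?_, ?_⟩
      · exact lt_of_le_of_lt (hImin p hK) hyp.1
      · exact lt_of_le_of_lt hyx (hmem I hI).2.2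
    · refine ⟨J, Finset.mem_erase.2 ⟨hKJ.symm, (hmem J hJ).1⟩, ?_, ?_⟩
      · exact lt_of_lt_of_le (hmem J hJ).2.1 hyx
      · exact lt_of_lt_of_le hyp.2 (hJmax p hK)
  · exact ⟨p, Finset.mem_erase.2 ⟨hpK, hp⟩, hyp⟩

lemma sum_overlap (μ : Measure ℝ) (s : Finset (ℝ × ℝ))
    (h : ∀ x : ℝ, (s.filter (fun p => x ∈ Ioo p.1 p.2)).card ≤ 2) :
    ∑ p ∈ s, μ (Ioo p.1 p.2) ≤ 2 * μ univ := by
  classical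
  calc ∑ p ∈ s, μ (Ioo p.1 p.2)
      = ∑ p ∈ s, ∫⁻ x, (Ioo p.1 p.2).indicator 1 x ∂μ := by
        refine Finset.sum_congr rfl fun p _ => ?_
        rw [lintegral_indicator_one measurableSet_Ioo]
    _ = ∫⁻ x, ∑ p ∈ s, (Ioo p.1 p.2).indicator 1 x ∂μ := by
        rw [lintegral_finsetSum]
        intro p _
        exact measurable_one.indicator measurableSet_Ioo
    _ ≤ ∫⁻ _, 2 ∂μ := by
        refine lintegral_mono fun x => ?_
        have : ∑ p ∈ s, (Ioo p.1 p.2).indicator (1 : ℝ → ℝ≥0∞) x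
            = ((s.filter (fun p => x ∈ Ioo p.1 p.2)).card : ℝ≥0∞) := by
          simp [Set.indicator_apply]
        rw [this]
        exact (Nat.cast_le (α := ℝ≥0∞)).2 (h x)
    _ = 2 * μ univ := by simp

lemma NM_lt_iff (μ ν : Measure ℝ) (t : ℝ≥0∞) :
    {x | t < NM μ ν x} = ⋃ p ∈ {p : ℝ × ℝ | t < μ (Ioo p.1 p.2) / ν (Ioo p.1 p.2)},
      Ioo p.1 p.2 := by
  ext x
  simp only [NM, mem_ofPred_eq, lt_iSup_iff, mem_iUnion, exists_prop, Prod.exists]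
  constructor
  · rintro ⟨a, b, h1, h2⟩; exact ⟨a, b, h2, h1⟩
  · rintro ⟨a, b, h1, h2⟩; exact ⟨a, b, h2, h1⟩

lemma NM_isOpen (μ ν : Measure ℝ) (t : ℝ≥0∞) : IsOpen {x | t < NM μ ν x} := by
  rw [NM_lt_iff]
  exact isOpen_biUnion fun p _ => isOpen_Ioo

lemma NM_measurable (μ ν : Measure ℝ) : Measurable (NM μ ν) :=
  measurable_of_Ioi fun t => (NM_isOpen μ ν t).measurableSet

lemma NM_weak (μ ν : Measure ℝ) [IsLocallyFiniteMeasure ν] (t : ℝ≥0∞) :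
    t * ν {x | t < NM μ ν x} ≤ 2 * μ univ := by
  classical
  rw [(NM_isOpen μ ν t).measure_eq_iSup_isCompact, ENNReal.mul_iSup]
  refine iSup_le fun K => ?_
  rw [ENNReal.mul_iSup]
  refine iSup_le fun hKO => ?_
  rw [ENNReal.mul_iSup]
  refine iSup_le fun hK => ?_
  rw [NM_lt_iff] at hKO
  obtain ⟨b', hb', hfin, hcov⟩ := hK.elim_finite_subcover_image (fun p _ => isOpen_Ioo) hKO
  obtain ⟨s', hs', hcov', hov⟩ := cover_finset _ hfin.toFinset rfl
  have hKs : K ⊆ ⋃ p ∈ s', Ioo p.1 p.2 := by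
    refine Subset.trans ?_ hcov'
    simpa using hcov
  calc t * ν K ≤ t * ∑ p ∈ s', ν (Ioo p.1 p.2) := by
        gcongr
        exact (measure_mono hKs).trans (measure_biUnion_finset_le _ _)
    _ = ∑ p ∈ s', t * ν (Ioo p.1 p.2) := Finset.mul_sum _ _ _
    _ ≤ ∑ p ∈ s', μ (Ioo p.1 p.2) := by
        refine Finset.sum_le_sum fun p hp => ?_
        have : p ∈ b' := by simpa using hs' hp
        exact ENNReal.mul_le_of_le_div (le_of_lt (hb' this))
    _ ≤ 2 * μ univ := sum_overlap μ s' hov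

lemma NM_mono {μ μ' ν : Measure ℝ} (h : μ ≤ μ') (x : ℝ) : NM μ ν x ≤ NM μ' ν x := by
  unfold NM
  gcongr

/-- weak type with truncation -/
lemma NM_weak_trunc (ν : Measure ℝ) [IsLocallyFiniteMeasure ν] (h : ℝ → ℝ≥0∞)
    (hh : Measurable h) (t : ℝ≥0∞) :
    t * ν {x | 2 * t < NM (ν.withDensity h) ν x} ≤ 2 * ∫⁻ x in {x | t < h x}, h x ∂ν := by
  have hm : MeasurableSet {x | t < h x} := measurableSet_lt measurable_const hh
  set g := {x | t < h x}.indicator h with hg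
  have hsub : {x | 2 * t < NM (ν.withDensity h) ν x} ⊆ {x | t < NM (ν.withDensity g) ν x} := by
    intro x hx
    simp only [NM, mem_ofPred_eq, lt_iSup_iff] at hx ⊢
    obtain ⟨a, b, hab, hlt⟩ := hx
    refine ⟨a, b, hab, ?_⟩
    rw [withDensity_apply _ measurableSet_Ioo] at hlt ⊢
    have h1 : ∫⁻ y in Ioo a b, h y ∂ν ≤ ∫⁻ y in Ioo a b, g y ∂ν + t * ν (Ioo a b) := by
      calc ∫⁻ y in Ioo a b, h y ∂ν ≤ ∫⁻ y in Ioo a b, (g y + t) ∂ν := by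
            refine lintegral_mono fun y => ?_
            by_cases hy : t < h y
            · simp [hg, hy]
            · simp only [hg, Set.indicator_apply, mem_ofPred_eq, hy, if_false, zero_add]
              exact not_lt.1 hy
        _ = _ := by
            rw [lintegral_add_right _ measurable_const]; simp
    by_contra hcon
    push Not at hcon
    have h2 : (∫⁻ y in Ioo a b, h y ∂ν) / ν (Ioo a b) ≤ t + t := by
      calc _ ≤ (∫⁻ y in Ioo a b, g y ∂ν + t * ν (Ioo a b)) / ν (Ioo a b) := by gcongr
        _ = (∫⁻ y in Ioo a b, g y ∂ν) / ν (Ioo a b) + t * ν (Ioo a b) / ν (Ioo a b) :=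
            ENNReal.add_div
        _ ≤ t + t := by
            gcongr
            exact ENNReal.div_le_of_le_mul le_rfl
    rw [← two_mul] at h2
    exact absurd hlt (not_lt.2 h2)
  calc t * ν {x | 2 * t < NM (ν.withDensity h) ν x}
      ≤ t * ν {x | t < NM (ν.withDensity g) ν x} := by gcongr
    _ ≤ 2 * (ν.withDensity g) univ := NM_weak _ _ _
    _ = _ := by
      rw [withDensity_apply _ MeasurableSet.univ, Measure.restrict_univ, hg,
        lintegral_indicator hm]

lemma lintegral_Iio_two (F : ℝ≥0∞) :
    F ^ 2 / 8 ≤ ∫⁻ s in Ioi (0:ℝ), ({s | ENNReal.ofReal (2 * s) < F}).indicator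
      (fun s => ENNReal.ofReal s) s := by
  by_cases hF : F = ⊤
  · subst hF
    have : (⊤ : ℝ≥0∞) ≤ ∫⁻ s in Ioi (0:ℝ), ({s | ENNReal.ofReal (2 * s) < ⊤}).indicator
      (fun s => ENNReal.ofReal s) s := by
      calc (⊤ : ℝ≥0∞) = ∫⁻ s in Ioi (1:ℝ), 1 := by simp
        _ ≤ ∫⁻ s in Ioi (1:ℝ), ({s | ENNReal.ofReal (2 * s) < ⊤}).indicator
              (fun s => ENNReal.ofReal s) s := by
            refine setLIntegral_mono' measurableSet_Ioi fun s hs => ?_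
            simp only [ENNReal.ofReal_lt_top, Set.indicator_apply, mem_ofPred_eq, if_true]
            exact ENNReal.one_le_ofReal.2 (le_of_lt hs)
        _ ≤ _ := lintegral_mono_set (Ioi_subset_Ioi zero_le_one)
    exact le_top.trans this
  · lift F to NNReal using hF
    have hset : MeasurableSet {s : ℝ | ENNReal.ofReal (2 * s) < (F : ℝ≥0∞)} :=
      measurableSet_lt (by fun_prop) measurable_const
    rw [setLIntegral_indicator hset]
    have hsub : Ioo (0:ℝ) (F / 2) ⊆ {s : ℝ | ENNReal.ofReal (2 * s) < (F : ℝ≥0∞)} ∩ Ioi 0 := by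
      intro s hs
      refine ⟨?_, hs.1⟩
      have h1 : 2 * s < F := by linarith [hs.2]
      have h0 : (0:ℝ) < F := by linarith [hs.1, hs.2]
      show ENNReal.ofReal (2 * s) < (F : ℝ≥0∞)
      rw [← ENNReal.ofReal_coe_nnreal]
      exact (ENNReal.ofReal_lt_ofReal_iff h0).2 h1
    refine le_trans (le_of_eq ?_) (lintegral_mono_set hsub)
    have hF0 : (0:ℝ) ≤ F / 2 := by positivity
    rw [restrict_Ioo_eq_restrict_Ioc, ← ofReal_integral_eq_lintegral_ofReal]
    · rw [← intervalIntegral.integral_of_le hF0, integral_id]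
      rw [← ENNReal.ofReal_coe_nnreal, ← ENNReal.ofReal_pow F.coe_nonneg,
        show (8:ℝ≥0∞) = ENNReal.ofReal 8 by simp, ← ENNReal.ofReal_div_of_pos (by norm_num)]
      congr 1
      ring
    · exact (intervalIntegral.intervalIntegrable_id).1
    · exact (ae_restrict_iff' measurableSet_Ioc).2 (Eventually.of_forall fun s hs => hs.1.le)

lemma lintegral_Iio_one (F : ℝ≥0∞) :
    ∫⁻ s in Ioi (0:ℝ), ({s | ENNReal.ofReal s < F}).indicator
      (fun _ => (1 : ℝ≥0∞)) s ≤ F := by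
  by_cases hF : F = ⊤
  · simp [hF]
  · lift F to NNReal using hF
    have hset : MeasurableSet {s : ℝ | ENNReal.ofReal s < (F : ℝ≥0∞)} :=
      measurableSet_lt (by fun_prop) measurable_const
    rw [setLIntegral_indicator hset]
    have hsub : {s : ℝ | ENNReal.ofReal s < (F : ℝ≥0∞)} ∩ Ioi 0 ⊆ Ioo (0:ℝ) F := by
      rintro s ⟨hs1, hs2⟩
      refine ⟨hs2, ?_⟩
      have hs1' : ENNReal.ofReal s < (F : ℝ≥0∞) := hs1
      rw [← ENNReal.ofReal_coe_nnreal] at hs1'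
      exact ENNReal.ofReal_lt_ofReal_iff'.1 hs1' |>.1
    refine (lintegral_mono_set hsub).trans ?_
    simp

lemma NM_strong_aux (ν : Measure ℝ) [IsLocallyFiniteMeasure ν] (h : ℝ → ℝ≥0∞)
    (hh : Measurable h) (s : ℝ) :
    ∫⁻ x, ({s | ENNReal.ofReal (2 * s) < NM (ν.withDensity h) ν x}).indicator
            (fun s => ENNReal.ofReal s) s ∂ν ≤
      2 * ∫⁻ x in {x | ENNReal.ofReal s < h x}, h x ∂ν := by
  have h1 := NM_weak_trunc ν h hh (ENNReal.ofReal s)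
  have h3 : ENNReal.ofReal (2 * s) = 2 * ENNReal.ofReal s := by
    rw [ENNReal.ofReal_mul zero_le_two, ENNReal.ofReal_ofNat]
  have h2 : ∀ x, ({s | ENNReal.ofReal (2 * s) < NM (ν.withDensity h) ν x}).indicator
    (fun s => ENNReal.ofReal s) s = ({x | 2 * ENNReal.ofReal s < NM (ν.withDensity h) ν x}).indicator
      (fun _ => ENNReal.ofReal s) x := by
    intro x
    simp only [Set.indicator_apply, mem_ofPred_eq, h3]
  rw [lintegral_congr h2, lintegral_indicator_const
    (measurableSet_lt measurable_const (NM_measurable _ _))]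
  exact h1

lemma NM_strong (ν : Measure ℝ) [SFinite ν] [IsLocallyFiniteMeasure ν] (h : ℝ → ℝ≥0∞)
    (hh : Measurable h) :
    ∫⁻ x, NM (ν.withDensity h) ν x ^ 2 ∂ν ≤ 16 * ∫⁻ x, h x ^ 2 ∂ν := by
  have hNm := NM_measurable (ν.withDensity h) ν
  set N := NM (ν.withDensity h) ν with hN
  have e1 : ∫⁻ x, N x ^ 2 / 8 ∂ν ≤ 2 * ∫⁻ x, h x ^ 2 ∂ν := by
    calc ∫⁻ x, N x ^ 2 / 8 ∂ν
        ≤ ∫⁻ x, (∫⁻ s in Ioi (0:ℝ), ({s | ENNReal.ofReal (2 * s) < N x}).indicator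
            (fun s => ENNReal.ofReal s) s) ∂ν := lintegral_mono fun x => lintegral_Iio_two _
      _ = ∫⁻ s in Ioi (0:ℝ), ∫⁻ x, ({s | ENNReal.ofReal (2 * s) < N x}).indicator
            (fun s => ENNReal.ofReal s) s ∂ν := by
          rw [lintegral_lintegral_swap]
          refine Measurable.aemeasurable ?_
          have : Function.uncurry (fun (x s : ℝ) => ({s | ENNReal.ofReal (2 * s) < N x}).indicator
            (fun s => ENNReal.ofReal s) s) = ({p : ℝ × ℝ | ENNReal.ofReal (2 * p.2) < N p.1}).indicator
            (fun p => ENNReal.ofReal p.2) := by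
            ext p; simp [Function.uncurry, Set.indicator_apply]
          rw [this]
          refine Measurable.indicator (by fun_prop) ?_
          exact measurableSet_lt (by fun_prop) (hNm.comp measurable_fst)
      _ ≤ ∫⁻ s in Ioi (0:ℝ), 2 * ∫⁻ x in {x | ENNReal.ofReal s < h x}, h x ∂ν := by
          refine setLIntegral_mono' measurableSet_Ioi fun s hs => ?_
          have hs' : (0:ℝ) < s := hs
          exact NM_strong_aux ν h hh s
      _ = 2 * ∫⁻ s in Ioi (0:ℝ), ∫⁻ x, h x * ({s | ENNReal.ofReal s < h x}).indicator
              (fun _ => (1 : ℝ≥0∞)) s ∂ν := by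
          rw [lintegral_const_mul' _ _ (by simp)]
          congr 1
          refine lintegral_congr fun s => ?_
          rw [← lintegral_indicator (measurableSet_lt measurable_const hh)]
          refine lintegral_congr fun x => ?_
          simp [Set.indicator_apply]
      _ = 2 * ∫⁻ x, (∫⁻ s in Ioi (0:ℝ), h x * ({s | ENNReal.ofReal s < h x}).indicator
              (fun _ => (1 : ℝ≥0∞)) s) ∂ν := by
          rw [lintegral_lintegral_swap]
          refine Measurable.aemeasurable ?_
          have : Function.uncurry (fun (s x : ℝ) => h x * ({s | ENNReal.ofReal s < h x}).indicator
            (fun _ => (1 : ℝ≥0∞)) s) = fun p : ℝ × ℝ => h p.2 *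
              ({p : ℝ × ℝ | ENNReal.ofReal p.1 < h p.2}).indicator (fun _ => (1 : ℝ≥0∞)) p := by
            ext p; simp [Function.uncurry, Set.indicator_apply]
          rw [this]
          refine Measurable.mul (hh.comp measurable_snd) (Measurable.indicator (by fun_prop) ?_)
          exact measurableSet_lt (by fun_prop) (hh.comp measurable_snd)
      _ ≤ 2 * ∫⁻ x, h x ^ 2 ∂ν := by
          gcongr with x
          rw [lintegral_const_mul _ (Measurable.indicator (by fun_prop)
            (measurableSet_lt (by fun_prop) (by fun_prop))), sq]
          gcongr
          exact lintegral_Iio_one _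
  calc ∫⁻ x, N x ^ 2 ∂ν = 8 * ∫⁻ x, N x ^ 2 / 8 ∂ν := by
        rw [← lintegral_const_mul _ (by fun_prop)]
        refine lintegral_congr fun x => ?_
        rw [ENNReal.mul_div_cancel (by simp) (by simp)]
    _ ≤ 8 * (2 * ∫⁻ x, h x ^ 2 ∂ν) := by gcongr
    _ = (8 * 2) * ∫⁻ x, h x ^ 2 ∂ν := by rw [mul_assoc]
    _ = _ := by congr 1; norm_num

/-- the measure `|f| dx` -/
def absM (f : ℝ → ℝ) : Measure ℝ := volume.withDensity fun y => ENNReal.ofReal |f y|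

lemma absM_Ioo (f : ℝ → ℝ) (a b : ℝ) :
    absM f (Ioo a b) = ∫⁻ y in Ioo a b, ENNReal.ofReal |f y| :=
  withDensity_apply _ measurableSet_Ioo

lemma HLMax_eq_NM (f : ℝ → ℝ) (x : ℝ) : HLMax f x = NM (absM f) volume x := by
  apply le_antisymm
  · refine iSup_le fun a => iSup_le fun b => iSup_le fun hab => iSup_le fun hx => ?_
    rw [← absM_Ioo]
    have hlim : Tendsto (fun ε : ℝ => (ENNReal.ofReal (b - a + 2 * ε))⁻¹ * absM f (Ioo a b))
        (𝓝[>] 0) (𝓝 ((ENNReal.ofReal (b - a))⁻¹ * absM f (Ioo a b))) := by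
      refine ENNReal.Tendsto.mul_const ?_ (Or.inl ?_)
      · refine tendsto_inv_iff.2 ?_
        refine ENNReal.tendsto_ofReal ?_
        have : Tendsto (fun ε : ℝ => b - a + 2 * ε) (𝓝 0) (𝓝 (b - a + 2 * 0)) := by
          apply Continuous.tendsto; fun_prop
        simpa using this.mono_left nhdsWithin_le_nhds
      · simp
    refine le_of_tendsto hlim ?_
    filter_upwards [self_mem_nhdsWithin] with ε hε
    have hε' : (0:ℝ) < ε := hε
    unfold NM
    refine le_iSup_of_le (a - ε) (le_iSup_of_le (b + ε) (le_iSup_of_le ⟨?_, ?_⟩ ?_))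
    · linarith [hx.1]
    · linarith [hx.2]
    · rw [Real.volume_Ioo, mul_comm, ← div_eq_mul_inv]
      have : b + ε - (a - ε) = b - a + 2 * ε := by ring
      rw [this]
      gcongr
      · linarith
      · linarith
  · refine iSup_le fun a => iSup_le fun b => iSup_le fun hx => ?_
    unfold HLMax
    refine le_iSup_of_le a (le_iSup_of_le b (le_iSup_of_le (hx.1.trans hx.2)
      (le_iSup_of_le ⟨hx.1.le, hx.2.le⟩ ?_)))
    rw [← absM_Ioo, Real.volume_Ioo, div_eq_mul_inv, mul_comm]

lemma HLMax_measurable (f : ℝ → ℝ) : Measurable (HLMax f) := by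
  have : HLMax f = NM (absM f) volume := funext (HLMax_eq_NM f)
  rw [this]; exact NM_measurable _ _

lemma Mr_measurable (s : ℝ) (f : ℝ → ℝ) : Measurable (Mr s f) :=
  (HLMax_measurable _).pow_const _

lemma HLMax_weak (f : ℝ → ℝ) (t : ℝ≥0∞) :
    t * volume {x | t < HLMax f x} ≤ 2 * ∫⁻ y, ENNReal.ofReal |f y| := by
  have := NM_weak (absM f) volume t
  simp_rw [← HLMax_eq_NM] at this
  rwa [absM, withDensity_apply _ MeasurableSet.univ, Measure.restrict_univ] at this

/-- bound of the maximal function by a sup bound -/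
lemma HLMax_le_const (f : ℝ → ℝ) (K : ℝ) (hK : ∀ x, |f x| ≤ K) (x : ℝ) :
    HLMax f x ≤ ENNReal.ofReal K := by
  refine iSup_le fun a => iSup_le fun b => iSup_le fun hab => iSup_le fun hx => ?_
  have h1 : ∫⁻ y in Ioo a b, ENNReal.ofReal |f y| ≤ ENNReal.ofReal K * ENNReal.ofReal (b - a) := by
    calc _ ≤ ∫⁻ y in Ioo a b, ENNReal.ofReal K := by
          gcongr with y; exact hK y
      _ = _ := by simp
  rw [mul_comm, ← div_eq_mul_inv]
  exact ENNReal.div_le_of_le_mul h1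

lemma le_HLMax_of_continuous (f : ℝ → ℝ) (hf : Continuous f) (x : ℝ) :
    ENNReal.ofReal |f x| ≤ HLMax f x := by
  refine ENNReal.le_of_forall_pos_le_add fun ε hε _ => ?_
  obtain ⟨δ, hδ, hd⟩ := Metric.continuousAt_iff.1 (hf.abs.continuousAt (x := x)) ε hε
  have hlow : ∀ y ∈ Ioo (x - δ) (x + δ), ENNReal.ofReal (|f x| - ε) ≤ ENNReal.ofReal |f y| := by
    intro y hy
    have : dist y x < δ := by
      rw [Real.dist_eq, abs_lt]; constructor <;> linarith [hy.1, hy.2]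
    have := hd this
    rw [Real.dist_eq, abs_lt] at this
    exact ENNReal.ofReal_le_ofReal (by linarith [this.1])
  have h1 : ENNReal.ofReal (|f x| - ε) ≤ HLMax f x := by
    unfold HLMax
    refine le_iSup_of_le (x - δ) (le_iSup_of_le (x + δ) (le_iSup_of_le (by linarith)
      (le_iSup_of_le ⟨by linarith, by linarith⟩ ?_)))
    rw [mul_comm, ← div_eq_mul_inv, ENNReal.le_div_iff_mul_le]
    · calc _ = ∫⁻ y in Ioo (x - δ) (x + δ), ENNReal.ofReal (|f x| - ε) := by simp
        _ ≤ _ := setLIntegral_mono' measurableSet_Ioo hlow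
    · left; simp; linarith
    · left; simp
  calc ENNReal.ofReal |f x| = ENNReal.ofReal ((|f x| - ε) + ε) := by simp
    _ ≤ ENNReal.ofReal (|f x| - ε) + ENNReal.ofReal ε := ENNReal.ofReal_add_le
    _ ≤ HLMax f x + ε := by gcongr; simp

/-- `Mr` as a sup of `L^s` averages, and triangle inequality -/
lemma Mr_eq (s : ℝ) (hs : 0 < s) (f : ℝ → ℝ) (x : ℝ) :
    Mr s f x = ⨆ (a : ℝ) (b : ℝ) (_ : a < b) (_ : x ∈ Icc a b),
      ((ENNReal.ofReal (b - a))⁻¹ * ∫⁻ y in Ioo a b, ENNReal.ofReal (|f y|) ^ s) ^ (1 / s) := by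
  unfold Mr HLMax
  have key : ∀ y, ENNReal.ofReal |(|f y| ^ s)| = ENNReal.ofReal (|f y|) ^ s := by
    intro y
    rw [abs_of_nonneg (by positivity), ENNReal.ofReal_rpow_of_nonneg (abs_nonneg _) hs.le]
  simp_rw [key]
  have h0 : 0 < 1 / s := by positivity
  have hE := (ENNReal.orderIsoRpow (1 / s) h0)
  have happ : ∀ z : ℝ≥0∞, z ^ (1 / s) = ENNReal.orderIsoRpow (1 / s) h0 z := fun z => rfl
  simp only [happ, OrderIso.map_iSup]

lemma Mr_add_le (s : ℝ) (hs : 1 ≤ s) (f g : ℝ → ℝ) (hf : AEMeasurable f) (hg : AEMeasurable g)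
    (x : ℝ) : Mr s (fun y => f y + g y) x ≤ Mr s f x + Mr s g x := by
  have hs0 : 0 < s := by linarith
  rw [Mr_eq s hs0, Mr_eq s hs0, Mr_eq s hs0]
  refine iSup_le fun a => iSup_le fun b => iSup_le fun hab => iSup_le fun hx => ?_
  have hinv : 0 ≤ 1 / s := by positivity
  calc _ ≤ ((ENNReal.ofReal (b - a))⁻¹ *
        ∫⁻ y in Ioo a b, (ENNReal.ofReal (|f y|) + ENNReal.ofReal |g y|) ^ s) ^ (1 / s) := by
        gcongr with y
        rw [← ENNReal.ofReal_add (abs_nonneg _) (abs_nonneg _)]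
        exact ENNReal.ofReal_le_ofReal (abs_add_le _ _)
    _ = ((ENNReal.ofReal (b - a))⁻¹) ^ (1 / s) *
        (∫⁻ y in Ioo a b, (ENNReal.ofReal (|f y|) + ENNReal.ofReal |g y|) ^ s) ^ (1 / s) :=
        ENNReal.mul_rpow_of_nonneg _ _ hinv
    _ ≤ ((ENNReal.ofReal (b - a))⁻¹) ^ (1 / s) *
        ((∫⁻ y in Ioo a b, (ENNReal.ofReal (|f y|)) ^ s) ^ (1 / s) +
        (∫⁻ y in Ioo a b, (ENNReal.ofReal (|g y|)) ^ s) ^ (1 / s)) := by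
        gcongr
        refine ENNReal.lintegral_Lp_add_le ?_ ?_ hs
        · exact (hf.abs.ennreal_ofReal).restrict
        · exact (hg.abs.ennreal_ofReal).restrict
    _ = _ := by
        rw [mul_add, ← ENNReal.mul_rpow_of_nonneg _ _ hinv, ← ENNReal.mul_rpow_of_nonneg _ _ hinv]
    _ ≤ _ := by
        gcongr
        · exact le_iSup_of_le a (le_iSup_of_le b (le_iSup_of_le hab (le_iSup_of_le hx le_rfl)))
        · exact le_iSup_of_le a (le_iSup_of_le b (le_iSup_of_le hab (le_iSup_of_le hx le_rfl)))

lemma Mr_mono_exp (s t : ℝ) (hs : 0 < s) (hst : s ≤ t) (f : ℝ → ℝ) (hf : AEMeasurable f)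
    (x : ℝ) : Mr s f x ≤ Mr t f x := by
  have ht : 0 < t := hs.trans_le hst
  rw [Mr_eq s hs, Mr_eq t ht]
  gcongr with a b hab hx
  have hvol : (volume (Ioo a b)) = ENNReal.ofReal (b - a) := Real.volume_Ioo
  set ν : Measure ℝ := (ENNReal.ofReal (b - a))⁻¹ • (volume.restrict (Ioo a b)) with hν
  have hne : ENNReal.ofReal (b - a) ≠ 0 := by simp; linarith
  have : IsProbabilityMeasure ν := ⟨by
    simp only [hν, Measure.smul_apply, Measure.restrict_apply_univ, hvol, smul_eq_mul]
    exact ENNReal.inv_mul_cancel hne ENNReal.ofReal_ne_top⟩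
  have e : ∀ p : ℝ, (ENNReal.ofReal (b - a))⁻¹ * ∫⁻ y in Ioo a b, ENNReal.ofReal (|f y|) ^ p
      = ∫⁻ y, ENNReal.ofReal (|f y|) ^ p ∂ν := by
    intro p; rw [hν, lintegral_smul_measure]; rfl
  rw [e, e]
  have hm : AEStronglyMeasurable f ν := by
    have : AEMeasurable f ν := (hf.restrict).smul_measure _
    exact this.aestronglyMeasurable
  have := eLpNorm'_le_eLpNorm'_of_exponent_le hs hst ν hm
  simp only [eLpNorm'] at this
  simpa [Real.enorm_eq_ofReal_abs] using this

/-- Lipschitz, compactly supported functions -/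
structure Nice (f : ℝ → ℝ) : Prop where
  lip : ∃ L : NNReal, LipschitzWith L f
  supp : ∃ R : ℝ, 0 < R ∧ ∀ x, R < |x| → f x = 0

lemma Nice.continuous {f : ℝ → ℝ} (hf : Nice f) : Continuous f := by
  obtain ⟨L, hL⟩ := hf.lip
  exact hL.continuous

lemma Nice.bounded {f : ℝ → ℝ} (hf : Nice f) : ∃ K : ℝ, 0 < K ∧ ∀ x, |f x| ≤ K := by
  obtain ⟨L, hL⟩ := hf.lip
  obtain ⟨R, hR, hs⟩ := hf.supp
  refine ⟨L * (2 * R + 1) + 1, by positivity, fun x => ?_⟩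
  by_cases hx : R < |x|
  · rw [hs x hx]; simp; positivity
  · push Not at hx
    have h1 := hL.dist_le_mul x (R + 1)
    rw [hs (R + 1) (by rw [abs_of_pos (by linarith)]; linarith), Real.dist_eq, Real.dist_eq,
      sub_zero] at h1
    have h2 : |x - (R + 1)| ≤ 2 * R + 1 := by
      rw [abs_le] at hx ⊢; constructor <;> linarith
    have : (L : ℝ) * |x - (R + 1)| ≤ L * (2 * R + 1) := by gcongr
    linarith

lemma Nice.integrable {f : ℝ → ℝ} (hf : Nice f) : Integrable f := by
  obtain ⟨R, hR, hs⟩ := hf.supp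
  refine hf.continuous.integrable_of_hasCompactSupport ?_
  refine HasCompactSupport.intro (isCompact_Icc (a := -R) (b := R)) fun x hx => hs x ?_
  by_contra h
  push Not at h
  exact hx (abs_le.1 h)

/-- symmetric difference quotient -/
def DQ (f : ℝ → ℝ) (x t : ℝ) : ℝ := (f (x - t) - f (x + t)) / t

/-- explicit formula for the Hilbert transform -/
def H0 (f : ℝ → ℝ) (x : ℝ) : ℝ := ∫ t in Ioi (0:ℝ), DQ f x t

lemma DQ_measurable {f : ℝ → ℝ} (hf : Nice f) :
    Measurable (Function.uncurry (DQ f)) := by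
  have := hf.continuous.measurable
  unfold DQ Function.uncurry
  fun_prop

lemma DQ_bound {f : ℝ → ℝ} {L : NNReal} (hL : LipschitzWith L f) {R : ℝ}
    (hs : ∀ x, R < |x| → f x = 0) (x t : ℝ) (ht : 0 < t) :
    |DQ f x t| ≤ (Ioc (0:ℝ) (|x| + R)).indicator (fun _ => 2 * (L : ℝ)) t := by
  unfold DQ
  by_cases h : t ≤ |x| + R
  · rw [indicator_of_mem (show t ∈ Ioc (0:ℝ) (|x| + R) from ⟨ht, h⟩), abs_div, abs_of_pos ht,
      div_le_iff₀ ht]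
    have := hL.dist_le_mul (x - t) (x + t)
    rw [Real.dist_eq, Real.dist_eq] at this
    have e : |x - t - (x + t)| = 2 * t := by
      rw [show x - t - (x + t) = -(2 * t) by ring, abs_neg, abs_of_pos (by linarith)]
    rw [e] at this
    linarith
  · rw [indicator_of_notMem (fun h' => h h'.2)]
    push Not at h
    have h1 : R < |x - t| := by
      have := abs_sub_abs_le_abs_sub t x
      rw [abs_of_pos ht, abs_sub_comm] at this; linarith
    have h2 : R < |x + t| := by
      have := abs_sub_abs_le_abs_sub t (-x)
      rw [abs_of_pos ht, abs_neg, sub_neg_eq_add, add_comm t x] at this; linarith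
    rw [hs _ h1, hs _ h2]; simp

lemma DQ_integrable {f : ℝ → ℝ} (hf : Nice f) (x : ℝ) : IntegrableOn (DQ f x) (Ioi 0) := by
  obtain ⟨L, hL⟩ := hf.lip
  obtain ⟨R, hR, hs⟩ := hf.supp
  have hi : IntegrableOn ((Ioc (0:ℝ) (|x| + R)).indicator (fun _ => 2 * (L : ℝ))) (Ioi 0) := by
    refine Integrable.integrableOn ?_
    rw [integrable_indicator_iff measurableSet_Ioc]
    exact integrableOn_const (by simp)
  refine Integrable.mono' hi ?_ ?_
  · exact ((DQ_measurable hf).comp measurable_prodMk_left).aestronglyMeasurable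
  · exact (ae_restrict_iff' measurableSet_Ioi).2 (Eventually.of_forall fun t ht =>
      DQ_bound hL hs x t ht)

lemma H0_bound {f : ℝ → ℝ} (hf : Nice f) (S : ℝ) : ∃ K : ℝ, 0 < K ∧ ∀ x, |x| ≤ S → |H0 f x| ≤ K := by
  obtain ⟨L, hL⟩ := hf.lip
  obtain ⟨R, hR, hs⟩ := hf.supp
  refine ⟨2 * L * (|S| + R) + 1, by positivity, fun x hx => ?_⟩
  have h1 : |H0 f x| ≤ ∫ t in Ioi (0:ℝ), (Ioc (0:ℝ) (|x| + R)).indicator (fun _ => 2 * (L : ℝ)) t := by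
    unfold H0
    rw [← Real.norm_eq_abs]
    refine norm_integral_le_of_norm_le ?_ ?_
    · refine Integrable.integrableOn ?_
      rw [integrable_indicator_iff measurableSet_Ioc]
      exact integrableOn_const (by simp)
    · exact (ae_restrict_iff' measurableSet_Ioi).2 (Eventually.of_forall fun t ht =>
        DQ_bound hL hs x t ht)
  rw [setIntegral_indicator measurableSet_Ioc] at h1
  have h2 : Ioi (0:ℝ) ∩ Ioc 0 (|x| + R) = Ioc 0 (|x| + R) := by
    ext t; simp +contextual
  rw [h2] at h1
  have hx0 := abs_nonneg x
  have e : (volume.real (Ioc (0:ℝ) (|x| + R))) = |x| + R := by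
    rw [Real.volume_real_Ioc_of_le (by positivity)]; ring
  rw [setIntegral_const, e, smul_eq_mul] at h1
  have : (|x| + R) * (2 * (L:ℝ)) ≤ (|S| + R) * (2 * L) := by
    have := hx.trans (le_abs_self S)
    gcongr
  linarith

lemma H0_measurable {f : ℝ → ℝ} (hf : Nice f) : Measurable (H0 f) := by
  unfold H0
  have h : StronglyMeasurable (Function.uncurry (DQ f)) := (DQ_measurable hf).stronglyMeasurable
  exact (StronglyMeasurable.integral_prod_right (f := DQ f) h).measurable

lemma kernel_integrable {f : ℝ → ℝ} (hf : Integrable f) (x ε : ℝ) (hε : 0 < ε) :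
    IntegrableOn (fun y => f y / (x - y)) {y : ℝ | ε < |x - y|} := by
  have hm : MeasurableSet {y : ℝ | ε < |x - y|} := measurableSet_lt (by fun_prop) (by fun_prop)
  have hfm := hf.aestronglyMeasurable
  refine Integrable.mono' (g := fun y => ε⁻¹ * |f y|) ((hf.abs.const_mul _).integrableOn) ?_ ?_
  · refine AEStronglyMeasurable.restrict ?_
    have : Measurable fun y : ℝ => (x - y)⁻¹ := by fun_prop
    simp only [div_eq_mul_inv]
    exact hfm.mul this.aestronglyMeasurable
  · refine (ae_restrict_iff' hm).2 (Eventually.of_forall fun y hy => ?_)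
    have hy' : ε < |x - y| := hy
    rw [Real.norm_eq_abs, abs_div, div_eq_mul_inv, mul_comm]
    gcongr

lemma trunc_eq {f : ℝ → ℝ} (hf : Nice f) (x ε : ℝ) (hε : 0 < ε) :
    ∫ y in {y : ℝ | ε < |x - y|}, f y / (x - y) = ∫ t in Ioi ε, DQ f x t := by
  have hm : MeasurableSet {y : ℝ | ε < |x - y|} := measurableSet_lt (by fun_prop) (by fun_prop)
  have hI := kernel_integrable hf.integrable x ε hε
  rw [← integrable_indicator_iff hm] at hI
  rw [← integral_indicator hm, ← integral_sub_left_eq_self _ volume x]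
  have hI' := hI.comp_sub_left x
  set φ : ℝ → ℝ := fun t => f (x - t) / t with hφ
  have hm2 : MeasurableSet {t : ℝ | ε < |t|} := measurableSet_lt (by fun_prop) (by fun_prop)
  have e : (fun t => ({y : ℝ | ε < |x - y|}).indicator (fun y => f y / (x - y)) (x - t))
      = ({t : ℝ | ε < |t|}).indicator φ := by
    ext t; simp [Set.indicator_apply, hφ]
  rw [e] at hI' ⊢
  rw [integrable_indicator_iff hm2] at hI'
  rw [integral_indicator hm2]
  have hset : {t : ℝ | ε < |t|} = Iio (-ε) ∪ Ioi ε := by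
    ext t
    simp only [mem_ofPred_eq, lt_abs, mem_union, mem_Iio, mem_Ioi]
    constructor
    · rintro (h | h)
      · right; exact h
      · left; linarith
    · rintro (h | h)
      · right; linarith
      · left; exact h
  rw [hset] at hI' ⊢
  have hI1 : IntegrableOn φ (Iio (-ε)) := hI'.mono_set subset_union_left
  have hI2 : IntegrableOn φ (Ioi ε) := hI'.mono_set subset_union_right
  rw [setIntegral_union (by
    rw [Set.disjoint_left]; intro t h1 h2; simp only [mem_Iio, mem_Ioi] at h1 h2; linarith)
    measurableSet_Ioi hI1 hI2, ← integral_Iic_eq_integral_Iio, ← integral_comp_neg_Ioi]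
  have hI1' : IntegrableOn (fun t => φ (-t)) (Ioi ε) := by
    have : IntegrableOn φ (Iic (-ε)) := by
      rwa [integrableOn_Iic_iff_integrableOn_Iio]
    rw [← integrable_indicator_iff measurableSet_Iic] at this
    have := this.comp_neg
    rw [← integrableOn_Ici_iff_integrableOn_Ioi, ← integrable_indicator_iff measurableSet_Ici]
    have e2 : (Ici ε).indicator (fun t => φ (-t)) = fun t => (Iic (-ε)).indicator φ (-t) := by
      ext t; simp [Set.indicator_apply]
    rw [e2]
    exact this
  rw [← integral_add hI1' hI2]
  refine setIntegral_congr_fun measurableSet_Ioi fun t ht => ?_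
  simp only [hφ, DQ]
  have : t ≠ 0 := (hε.trans ht).ne'
  field_simp
  ring_nf

lemma H0_tendsto {f : ℝ → ℝ} (hf : Nice f) (x : ℝ) :
    Tendsto (fun ε : ℝ => ∫ y in {y : ℝ | ε < |x - y|}, f y / (x - y)) (𝓝[>] 0) (𝓝 (H0 f x)) := by
  have h1 : Tendsto (fun ε : ℝ => ∫ t in Ioi (0:ℝ), (Ioi ε).indicator (DQ f x) t) (𝓝[>] 0)
      (𝓝 (∫ t in Ioi (0:ℝ), DQ f x t)) := by
    refine tendsto_integral_filter_of_dominated_convergence (fun t => |DQ f x t|) ?_ ?_ ?_ ?_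
    · refine Eventually.of_forall fun ε => ?_
      exact ((((DQ_measurable hf).comp measurable_prodMk_left)).indicator
        measurableSet_Ioi).aestronglyMeasurable
    · refine Eventually.of_forall fun ε => Eventually.of_forall fun t => ?_
      rw [Real.norm_eq_abs, Set.indicator_apply]
      split_ifs <;> simp
    · exact (DQ_integrable hf x).abs
    · refine (ae_restrict_iff' measurableSet_Ioi).2 (Eventually.of_forall fun t ht => ?_)
      refine tendsto_const_nhds.congr' ?_
      have : ∀ᶠ ε in 𝓝[>] (0:ℝ), ε < t := nhdsWithin_le_nhds (Iio_mem_nhds ht)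
      filter_upwards [this] with ε hε
      rw [indicator_of_mem (show t ∈ Ioi ε from hε)]
  refine h1.congr' ?_
  filter_upwards [self_mem_nhdsWithin] with ε hε
  have hε' : (0:ℝ) < ε := hε
  rw [trunc_eq hf x ε hε, setIntegral_indicator measurableSet_Ioi]
  congr 2
  ext t; simp only [mem_inter_iff, mem_Ioi]
  constructor
  · exact fun h => h.2
  · exact fun h => ⟨hε'.trans h, h⟩

lemma Hil_eq {f : ℝ → ℝ} (hf : Nice f) (x : ℝ) : Hil f x = H0 f x :=
  (H0_tendsto hf x).limUnder_eq

/-- antisymmetry -/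
lemma H0_antisymm {f g : ℝ → ℝ} (hf : Nice f) (hg : Nice g) :
    ∫ x, g x * H0 f x = - ∫ x, f x * H0 g x := by
  have key : ∀ {f g : ℝ → ℝ}, Nice f → Nice g →
      Integrable (Function.uncurry fun x t : ℝ => g x * DQ f x t)
        (volume.prod (volume.restrict (Ioi (0:ℝ)))) := by
    intro f g hf hg
    obtain ⟨L, hL⟩ := hf.lip
    obtain ⟨R, hR, hs⟩ := hf.supp
    obtain ⟨R', hR', hs'⟩ := hg.supp
    obtain ⟨K, hK, hKb⟩ := hg.bounded
    have hdom : Integrable (Function.uncurry fun x t : ℝ =>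
        (Icc (-R') R').indicator (fun _ => K) x * (Ioc (0:ℝ) (R' + R)).indicator
          (fun _ => 2 * (L:ℝ)) t) (volume.prod (volume.restrict (Ioi (0:ℝ)))) := by
      refine Integrable.mul_prod ?_ ?_
      · rw [integrable_indicator_iff measurableSet_Icc]; exact integrableOn_const (by simp)
      · refine Integrable.integrableOn ?_
        rw [integrable_indicator_iff measurableSet_Ioc]; exact integrableOn_const (by simp)
    refine Integrable.mono' hdom ?_ ?_
    · refine Measurable.aestronglyMeasurable ?_
      exact (hg.continuous.measurable.comp measurable_fst).mul (DQ_measurable hf)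
    · have : ∀ᵐ p : ℝ × ℝ ∂((volume : Measure ℝ).prod (volume.restrict (Ioi (0:ℝ)))), (0:ℝ) < p.2 := by
        refine (Measure.quasiMeasurePreserving_snd (μ := (volume : Measure ℝ))
          (ν := volume.restrict (Ioi (0:ℝ)))).ae ?_
        exact ae_restrict_mem measurableSet_Ioi
      filter_upwards [this] with p hp
      obtain ⟨x, t⟩ := p
      simp only [Function.uncurry, Real.norm_eq_abs, abs_mul]
      have hp' : 0 < t := hp
      by_cases hx : x ∈ Icc (-R') R'
      · rw [indicator_of_mem hx]
        refine mul_le_mul (hKb x) ?_ (abs_nonneg _) hK.le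
        refine (DQ_bound hL hs x t hp').trans ?_
        refine indicator_le_indicator_of_subset ?_ (fun _ => by positivity) t
        have := abs_le.2 hx
        exact Ioc_subset_Ioc_right (by linarith)
      · have : g x = 0 := hs' x (by
          by_contra h; push Not at h; exact hx (abs_le.1 h))
        simp [this, hx]
  have swap : ∀ {f g : ℝ → ℝ}, Nice f → Nice g →
      ∫ x, g x * H0 f x = ∫ t in Ioi (0:ℝ), ∫ x, g x * DQ f x t := by
    intro f g hf hg
    rw [← integral_integral_swap (key hf hg)]
    refine integral_congr_ae (Eventually.of_forall fun x => ?_)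
    simp only [H0, integral_const_mul]
  rw [swap hf hg, swap hg hf, ← integral_neg]
  refine setIntegral_congr_fun measurableSet_Ioi fun t ht => ?_
  -- shift
  have hi : ∀ {f g : ℝ → ℝ}, Nice f → Nice g → ∀ s : ℝ, Integrable fun x => g x * f (x + s) := by
    intro f g hf hg s
    obtain ⟨K, hK, hKb⟩ := hf.bounded
    refine hg.integrable.mul_bdd (c := K) ?_ (Eventually.of_forall fun x => hKb _)
    have := hf.continuous
    exact Continuous.aestronglyMeasurable (by fun_prop)
  have expand : ∀ {f g : ℝ → ℝ}, Nice f → Nice g → ∫ x, g x * DQ f x t =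
      ((∫ x, g x * f (x + -t)) - ∫ x, g x * f (x + t)) * t⁻¹ := by
    intro f g hf hg
    rw [← integral_sub (hi hf hg _) (hi hf hg _), ← integral_mul_const]
    refine integral_congr_ae (Eventually.of_forall fun x => ?_)
    simp only [DQ, ← sub_eq_add_neg]
    ring
  have shift : ∀ s : ℝ, ∫ x, g x * f (x + s) = ∫ x, f x * g (x + -s) := by
    intro s
    rw [← integral_add_right_eq_self _ (-s)]
    refine integral_congr_ae (Eventually.of_forall fun x => ?_)
    simp only [neg_add_cancel_right]
    ring
  show ∫ x, g x * DQ f x t = -∫ x, f x * DQ g x t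
  rw [expand hf hg, expand hg hf, shift, shift, neg_neg]
  ring

/-- the weak type hypothesis -/
def WT (r A : ℝ) : Prop :=
  ∀ w f : ℝ → ℝ, IsWeight w →
          (∫⁻ x, ENNReal.ofReal |f x| * Mr r w x) < ⊤ →
          ∀ lam : ℝ, 0 < lam →
            ENNReal.ofReal lam *
                (∫⁻ x in {x : ℝ | lam < |Hil f x|}, ENNReal.ofReal (w x))
              ≤ ENNReal.ofReal A * ∫⁻ x, ENNReal.ofReal |f x| * Mr r w x

/-- the auxiliary density -/
def uE (r : ℝ) (W : ℝ → ℝ) (x : ℝ) : ℝ≥0∞ :=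
  ENNReal.ofReal (W x ^ (2 * r - 1)) / HLMax (fun y => W y ^ (2 * r - 1)) x ^ 2

lemma uE_measurable (r : ℝ) {W : ℝ → ℝ} (hW : Measurable W) : Measurable (uE r W) := by
  unfold uE
  exact ((hW.pow_const _).ennreal_ofReal).div ((HLMax_measurable _).pow_const _)

lemma Nice.rpow_integrable {W : ℝ → ℝ} (hW : Nice W) (h0 : ∀ x, 0 ≤ W x) {b : ℝ} (hb : 0 < b) :
    Integrable fun x => W x ^ b := by
  obtain ⟨R, hR, hs⟩ := hW.supp
  refine Continuous.integrable_of_hasCompactSupport ?_ ?_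
  · exact hW.continuous.rpow_const fun x => Or.inr hb.le
  refine HasCompactSupport.intro (isCompact_Icc (a := -R) (b := R)) fun x hx => ?_
  rw [hs x, Real.zero_rpow hb.ne']
  by_contra h
  push Not at h
  exact hx (abs_le.1 h)

lemma lemA {r : ℝ} (hr1 : 1 < r) {W : ℝ → ℝ} (hW : Nice W) (h0 : ∀ x, 0 ≤ W x)
    {E : Set ℝ} (hE : MeasurableSet E) :
    ∫⁻ x, Mr r (E.indicator W) x ^ (2 * r) * uE r W x ≤ 16 * ∫⁻ x in E, ENNReal.ofReal (W x) := by
  have hWm := hW.continuous.measurable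
  set v : ℝ → ℝ≥0∞ := fun x => ENNReal.ofReal (W x ^ (2 * r - 1)) with hv
  have hvm : Measurable v := (hWm.pow_const _).ennreal_ofReal
  set ν : Measure ℝ := volume.withDensity v with hν
  have hνfin : IsFiniteMeasure ν := by
    refine isFiniteMeasure_withDensity_ofReal ?_
    exact (hW.rpow_integrable h0 (by linarith)).2
  set h : ℝ → ℝ≥0∞ := E.indicator fun x => ENNReal.ofReal (W x ^ (1 - r)) with hh
  have hhm : Measurable h := ((hWm.pow_const _).ennreal_ofReal).indicator hE
  set N := NM (ν.withDensity h) ν with hN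
  have hNm : Measurable N := NM_measurable _ _
  have hμ : ν.withDensity h = absM (fun y => |E.indicator W y| ^ r) := by
    rw [hν, ← withDensity_mul _ hvm hhm, absM]
    congr 1
    ext y
    rw [Pi.mul_apply]
    by_cases hy : y ∈ E
    · rw [hh, indicator_of_mem hy, indicator_of_mem hy, hv]
      rw [← ENNReal.ofReal_mul (Real.rpow_nonneg (h0 y) _), abs_of_nonneg (h0 y),
        abs_of_nonneg (Real.rpow_nonneg (h0 y) _)]
      congr 1
      rcases (h0 y).eq_or_lt with h | h
      · rw [← h, Real.zero_rpow (by linarith), zero_mul, Real.zero_rpow (by linarith)]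
      · rw [← Real.rpow_add h]; congr 1; ring
    · rw [hh, indicator_of_notMem hy, indicator_of_notMem hy, abs_zero,
        Real.zero_rpow (by linarith)]
      simp
  have habs : absM (fun y => W y ^ (2 * r - 1)) = ν := by
    rw [absM, hν]
    congr 1
    ext y
    rw [abs_of_nonneg (Real.rpow_nonneg (h0 y) _)]
  have hpt : ∀ x, HLMax (fun y => |E.indicator W y| ^ r) x ≤
      HLMax (fun y => W y ^ (2 * r - 1)) x * N x := by
    intro x
    rw [HLMax_eq_NM, HLMax_eq_NM, ← hμ, habs]
    refine iSup_le fun a => iSup_le fun b => iSup_le fun hx => ?_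
    have hle1 : ν (Ioo a b) / volume (Ioo a b) ≤ NM ν volume x :=
      le_iSup_of_le a (le_iSup_of_le b (le_iSup_of_le hx le_rfl))
    have hle2 : (ν.withDensity h) (Ioo a b) / ν (Ioo a b) ≤ N x :=
      le_iSup_of_le a (le_iSup_of_le b (le_iSup_of_le hx le_rfl))
    by_cases hz : ν (Ioo a b) = 0
    · have : (ν.withDensity h) (Ioo a b) = 0 := withDensity_absolutelyContinuous ν h hz
      rw [this]; simp
    · calc (ν.withDensity h) (Ioo a b) / volume (Ioo a b)
          = (ν (Ioo a b) * ((ν.withDensity h) (Ioo a b) / ν (Ioo a b))) / volume (Ioo a b) := by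
            rw [ENNReal.mul_div_cancel hz (measure_ne_top _ _)]
        _ = ν (Ioo a b) / volume (Ioo a b) * ((ν.withDensity h) (Ioo a b) / ν (Ioo a b)) := by
            simp only [div_eq_mul_inv]; ring
        _ ≤ _ := by gcongr
  calc ∫⁻ x, Mr r (E.indicator W) x ^ (2 * r) * uE r W x
      ≤ ∫⁻ x, v x * N x ^ 2 := by
        refine lintegral_mono fun x => ?_
        have e1 : Mr r (E.indicator W) x ^ (2 * r) = HLMax (fun y => |E.indicator W y| ^ r) x ^ 2 := by
          unfold Mr
          rw [← ENNReal.rpow_mul, show 1 / r * (2 * r) = (2:ℕ) by field_simp; norm_num,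
            ENNReal.rpow_natCast]
        rw [e1]
        unfold uE
        calc _ ≤ (HLMax (fun y => W y ^ (2 * r - 1)) x * N x) ^ 2 *
            (v x / HLMax (fun y => W y ^ (2 * r - 1)) x ^ 2) := by
              gcongr
              exact hpt x
          _ = HLMax (fun y => W y ^ (2 * r - 1)) x ^ 2 *
            (v x / HLMax (fun y => W y ^ (2 * r - 1)) x ^ 2) * N x ^ 2 := by ring
          _ ≤ v x * N x ^ 2 := by
              gcongr
              exact ENNReal.mul_div_le
    _ = ∫⁻ x, N x ^ 2 ∂ν := by
        rw [hν, lintegral_withDensity_eq_lintegral_mul _ hvm (hNm.pow_const 2)]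
        rfl
    _ ≤ 16 * ∫⁻ x, h x ^ 2 ∂ν := NM_strong ν h hhm
    _ = 16 * ∫⁻ x in E, ENNReal.ofReal (W x) := by
        rw [hν, lintegral_withDensity_eq_lintegral_mul _ hvm (hhm.pow_const 2),
          ← lintegral_indicator hE]
        congr 1
        refine lintegral_congr fun y => ?_
        rw [Pi.mul_apply]
        by_cases hy : y ∈ E
        · rw [hh, indicator_of_mem hy, indicator_of_mem hy, hv]
          rw [← ENNReal.ofReal_pow (Real.rpow_nonneg (h0 y) _),
            ← ENNReal.ofReal_mul (Real.rpow_nonneg (h0 y) _)]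
          congr 1
          rcases (h0 y).eq_or_lt with h | h
          · rw [← h, Real.zero_rpow (by linarith)]; simp
          · rw [← Real.rpow_natCast, ← Real.rpow_mul h.le, ← Real.rpow_add h]
            rw [show 2 * r - 1 + (1 - r) * ((2:ℕ):ℝ) = 1 by push_cast; ring, Real.rpow_one]
        · rw [hh, indicator_of_notMem hy, indicator_of_notMem hy]
          simp

/-- common assumptions on the regularized weight -/
structure Reg (W : ℝ → ℝ) (δ : ℝ) : Prop where
  nice : Nice W
  nonneg : ∀ x, 0 ≤ W x
  pos : 0 < δ
  low : ∀ x ∈ Icc (-1:ℝ) 2, δ ≤ W x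

lemma Reg.HL_le {W : ℝ → ℝ} {δ : ℝ} (hW : Reg W δ) {b : ℝ} (hb : 0 < b) :
    ∃ K : ℝ, 0 < K ∧ ∀ x, HLMax (fun y => W y ^ b) x ≤ ENNReal.ofReal K := by
  obtain ⟨K, hK, hKb⟩ := hW.nice.bounded
  refine ⟨K ^ b, by positivity, fun x => HLMax_le_const _ _ (fun y => ?_) x⟩
  rw [abs_of_nonneg (Real.rpow_nonneg (hW.nonneg y) _)]
  exact Real.rpow_le_rpow (hW.nonneg y) ((le_abs_self _).trans (hKb y)) hb.le

lemma Reg.le_HL {W : ℝ → ℝ} {δ : ℝ} (hW : Reg W δ) {b : ℝ} (hb : 0 < b) (x : ℝ) :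
    ENNReal.ofReal (W x ^ b) ≤ HLMax (fun y => W y ^ b) x := by
  have := le_HLMax_of_continuous (fun y => W y ^ b)
    (hW.nice.continuous.rpow_const fun x => Or.inr hb.le) x
  rwa [abs_of_nonneg (Real.rpow_nonneg (hW.nonneg x) _)] at this

/-- real version of the density -/
def uR (r : ℝ) (W : ℝ → ℝ) (x : ℝ) : ℝ := (uE r W x).toReal

lemma Reg.uE_bd {W : ℝ → ℝ} {δ r : ℝ} (hW : Reg W δ) (hr : 1 < r) :
    ∃ c C : ℝ, 0 < c ∧ 0 < C ∧ ∀ x ∈ Icc (-1:ℝ) 2,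
      ENNReal.ofReal c ≤ uE r W x ∧ uE r W x ≤ ENNReal.ofReal C := by
  have hb : 0 < 2 * r - 1 := by linarith
  obtain ⟨K, hK, hKb⟩ := hW.HL_le hb
  refine ⟨δ ^ (2 * r - 1) / K ^ 2, K / (δ ^ (2 * r - 1)) ^ 2, ?_, ?_, fun x hx => ?_⟩
  · have := hW.pos; positivity
  · have := hW.pos; positivity
  have hd : 0 < δ ^ (2 * r - 1) := Real.rpow_pos_of_pos hW.pos _
  have hle : δ ^ (2 * r - 1) ≤ W x ^ (2 * r - 1) :=
    Real.rpow_le_rpow hW.pos.le (hW.low x hx) hb.le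
  have h1 := hW.le_HL hb x
  unfold uE
  constructor
  · rw [ENNReal.ofReal_div_of_pos (by positivity), ENNReal.ofReal_pow hK.le]
    gcongr
    exact hKb x
  · rw [ENNReal.ofReal_div_of_pos (by positivity), ENNReal.ofReal_pow hd.le]
    gcongr
    · exact (ENNReal.ofReal_le_ofReal_iff hK.le).1 (h1.trans (hKb x))
    · exact (ENNReal.ofReal_le_ofReal hle).trans h1

lemma IsWeight_indicator {W : ℝ → ℝ} (hW : Nice W) (h0 : ∀ x, 0 ≤ W x)
    {E : Set ℝ} (hE : MeasurableSet E) : IsWeight (E.indicator W) := by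
  refine ⟨fun x => indicator_nonneg (fun y _ => h0 y) x, ?_⟩
  exact (hW.integrable.indicator hE).locallyIntegrable

lemma lemB {r A : ℝ} (hr1 : 1 < r) (hA : 0 < A) (hWT : WT r A) {W : ℝ → ℝ} {δ : ℝ}
    (hW : Reg W δ) {f : ℝ → ℝ} (hf : Nice f) (hfs : ∀ x, x ∉ Icc (-1:ℝ) 2 → f x = 0)
    {lam : ℝ} (hl : 0 < lam) :
    ENNReal.ofReal lam * (∫⁻ x in {x | lam < |H0 f x|}, ENNReal.ofReal (W x)) ≤
      ENNReal.ofReal A * ((∫⁻ x in Icc (-1:ℝ) 2, ENNReal.ofReal (|f x|) ^ (2 * r / (2 * r - 1)) *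
          uE r W x ^ (-(1 / (2 * r - 1)))) ^ ((2 * r - 1) / (2 * r)) *
        (16 * ∫⁻ x in {x | lam < |H0 f x|}, ENNReal.ofReal (W x)) ^ (1 / (2 * r))) := by
  have hHm := H0_measurable hf
  have hfm := hf.continuous.measurable
  set E := {x | lam < |H0 f x|} with hEdef
  have hE : MeasurableSet E := measurableSet_lt measurable_const hHm.abs
  have hEH : {x | lam < |Hil f x|} = E := by
    ext x; simp only [hEdef, mem_ofPred_eq, Hil_eq hf]
  obtain ⟨K, hK, hKb⟩ := hW.nice.bounded
  have hMb : ∀ x, Mr r (E.indicator W) x ≤ ENNReal.ofReal (K ^ r) ^ (1 / r) := by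
    intro x
    unfold Mr
    gcongr
    refine HLMax_le_const _ _ (fun y => ?_) x
    rw [abs_of_nonneg (by positivity)]
    gcongr
    rw [Set.indicator_apply]
    split_ifs
    · exact hKb y
    · simpa using hK.le
  have hfin : (∫⁻ x, ENNReal.ofReal |f x| * Mr r (E.indicator W) x) < ⊤ := by
    calc _ ≤ ∫⁻ x, ENNReal.ofReal |f x| * ENNReal.ofReal (K ^ r) ^ (1 / r) := by
          gcongr with x; exact hMb x
      _ = (∫⁻ x, ENNReal.ofReal |f x|) * ENNReal.ofReal (K ^ r) ^ (1 / r) := by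
          rw [lintegral_mul_const _ (by fun_prop)]
      _ < ⊤ := by
          refine ENNReal.mul_lt_top ?_ ?_
          · have := hf.integrable.abs.lintegral_lt_top
            exact this
          · exact ENNReal.rpow_lt_top_of_nonneg (by positivity) ENNReal.ofReal_ne_top
  have h1 := hWT _ f (IsWeight_indicator hW.nice hW.nonneg hE) hfin lam hl
  rw [hEH] at h1
  have e1 : ∫⁻ x in E, ENNReal.ofReal (E.indicator W x) = ∫⁻ x in E, ENNReal.ofReal (W x) :=
    setLIntegral_congr_fun hE fun x hx => by simp [hx]
  rw [e1] at h1
  refine h1.trans ?_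
  gcongr
  have hb : 0 < 2 * r - 1 := by linarith
  have hq : 0 < 2 * r := by linarith
  obtain ⟨c, C, hc, hC, hcC⟩ := hW.uE_bd hr1
  have hum := uE_measurable r hW.nice.continuous.measurable
  calc ∫⁻ x, ENNReal.ofReal |f x| * Mr r (E.indicator W) x
      = ∫⁻ x in Icc (-1:ℝ) 2, ENNReal.ofReal |f x| * Mr r (E.indicator W) x := by
        rw [← lintegral_indicator measurableSet_Icc]
        refine lintegral_congr fun x => ?_
        by_cases hx : x ∈ Icc (-1:ℝ) 2
        · rw [indicator_of_mem hx]
        · rw [indicator_of_notMem hx, hfs x hx]; simp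
    _ = ∫⁻ x in Icc (-1:ℝ) 2, (ENNReal.ofReal |f x| * uE r W x ^ (-(1 / (2 * r)))) *
          (Mr r (E.indicator W) x * uE r W x ^ (1 / (2 * r))) := by
        refine setLIntegral_congr_fun measurableSet_Icc fun x hx => ?_
        have hu0 : uE r W x ≠ 0 :=
          (lt_of_lt_of_le (ENNReal.ofReal_pos.2 hc) (hcC x hx).1).ne'
        have hut : uE r W x ≠ ⊤ := ((hcC x hx).2.trans_lt ENNReal.ofReal_lt_top).ne
        have : uE r W x ^ (-(1 / (2 * r))) * uE r W x ^ (1 / (2 * r)) = 1 := by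
          rw [← ENNReal.rpow_add _ _ hu0 hut, neg_add_cancel, ENNReal.rpow_zero]
        calc _ = (ENNReal.ofReal |f x| * Mr r (E.indicator W) x) *
              (uE r W x ^ (-(1 / (2 * r))) * uE r W x ^ (1 / (2 * r))) := by rw [this, mul_one]
          _ = _ := by ring
    _ ≤ (∫⁻ x in Icc (-1:ℝ) 2, (ENNReal.ofReal |f x| * uE r W x ^ (-(1 / (2 * r)))) ^
            (2 * r / (2 * r - 1))) ^ (1 / (2 * r / (2 * r - 1))) *
          (∫⁻ x in Icc (-1:ℝ) 2, (Mr r (E.indicator W) x * uE r W x ^ (1 / (2 * r))) ^ (2 * r)) ^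
            (1 / (2 * r)) := by
        refine ENNReal.lintegral_mul_le_Lp_mul_Lq _ ?_ ?_ ?_
        · refine Real.HolderConjugate.symm ?_
          exact Real.HolderConjugate.conjExponent (by linarith)
        · exact ((hfm.abs.ennreal_ofReal).mul (hum.pow_const _)).aemeasurable
        · exact ((Mr_measurable _ _).mul (hum.pow_const _)).aemeasurable
    _ ≤ _ := by
        rw [one_div_div]
        gcongr with x
        · refine le_of_eq ?_
          rw [ENNReal.mul_rpow_of_nonneg _ _ (by positivity), ← ENNReal.rpow_mul]
          congr 2
          field_simp
        · refine le_trans ?_ (lemA hr1 hW.nice hW.nonneg hE)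
          refine le_trans (setLIntegral_le_lintegral _ _) (le_of_eq (lintegral_congr fun x => ?_))
          rw [ENNReal.mul_rpow_of_nonneg _ _ (by positivity), ← ENNReal.rpow_mul]
          rw [one_div_mul_cancel hq.ne', ENNReal.rpow_one]

lemma lemC_num (μ : Measure ℝ) {g : ℝ → ℝ} (hg : Measurable g) (hg0 : ∀ x, 0 ≤ g x)
    {p B m : ℝ} (hp : 1 < p) (hB : 0 ≤ B) (hm : 0 ≤ m)
    (h : ∀ l : ℝ, 0 < l → μ {x | l < g x} ≤ ENNReal.ofReal ((B / l) ^ p))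
    (hμ : μ univ ≤ ENNReal.ofReal m) :
    ∫⁻ x, ENNReal.ofReal (g x) ∂μ ≤ ENNReal.ofReal ((1 + 1 / (p - 1)) * (B * m ^ (1 - 1 / p))) := by
  rw [lintegral_eq_lintegral_meas_lt μ (Eventually.of_forall hg0) hg.aemeasurable]
  rcases hB.eq_or_lt with hB0 | hB0
  · have : ∫⁻ t in Ioi (0:ℝ), μ {a | t < g a} = ∫⁻ t in Ioi (0:ℝ), 0 := by
      refine setLIntegral_congr_fun measurableSet_Ioi fun t ht => ?_
      have := h t ht
      rw [← hB0, zero_div, Real.zero_rpow (by linarith), ENNReal.ofReal_zero] at this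
      exact le_antisymm this bot_le
    rw [this]; simp
  rcases hm.eq_or_lt with hm0 | hm0
  · have hz : μ univ = 0 := by rw [← hm0] at hμ; simpa using hμ
    rw [Measure.measure_univ_eq_zero] at hz
    subst hz; simp
  set l0 := B * m ^ (-(1 / p)) with hl0
  have hl0p : 0 < l0 := by positivity
  rw [← Ioc_union_Ioi_eq_Ioi hl0p.le, lintegral_union measurableSet_Ioi (by
    rw [Set.disjoint_left]; intro x hx hx'; exact absurd hx.2 (not_le.2 hx'))]
  have h1 : ∫⁻ t in Ioc 0 l0, μ {a | t < g a} ≤ ENNReal.ofReal (B * m ^ (1 - 1 / p)) := by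
    calc _ ≤ ∫⁻ t in Ioc 0 l0, ENNReal.ofReal m := by
          gcongr with t
          exact (measure_mono (subset_univ _)).trans hμ
      _ = ENNReal.ofReal (m * l0) := by
          rw [setLIntegral_const, Real.volume_Ioc, sub_zero, ENNReal.ofReal_mul hm0.le]
      _ = _ := by
          congr 1
          rw [hl0, sub_eq_add_neg, Real.rpow_add hm0, Real.rpow_one]; ring
  have h2 : ∫⁻ t in Ioi l0, μ {a | t < g a} ≤
      ENNReal.ofReal (1 / (p - 1) * (B * m ^ (1 - 1 / p))) := by
    calc _ ≤ ∫⁻ t in Ioi l0, ENNReal.ofReal (B ^ p * t ^ (-p)) := by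
          refine setLIntegral_mono' measurableSet_Ioi fun t ht => ?_
          have htp : 0 < t := hl0p.trans ht
          refine (h t htp).trans (le_of_eq ?_)
          rw [Real.div_rpow hB htp.le, Real.rpow_neg htp.le, div_eq_mul_inv]
      _ = ENNReal.ofReal (∫ t in Ioi l0, B ^ p * t ^ (-p)) := by
          rw [ofReal_integral_eq_lintegral_ofReal]
          · exact (integrableOn_Ioi_rpow_of_lt (by linarith) hl0p).const_mul _
          · refine (ae_restrict_iff' measurableSet_Ioi).2 (Eventually.of_forall fun t ht => ?_)
            have htp : 0 < t := hl0p.trans ht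
            show 0 ≤ _
            positivity
      _ = _ := by
          congr 1
          rw [integral_const_mul, integral_Ioi_rpow_of_lt (by linarith) hl0p, hl0,
            Real.mul_rpow hB (by positivity), ← Real.rpow_mul hm0.le]
          rw [show -(1 / p) * (-p + 1) = 1 - 1 / p by field_simp; ring]
          rw [Real.rpow_add hB0, Real.rpow_neg hB, Real.rpow_one]
          have : B ^ p ≠ 0 := by positivity
          have h3 : -p + 1 ≠ 0 := by linarith
          have h4 : p - 1 ≠ 0 := by linarith
          field_simp
          rw [show -p + 1 = -(p - 1) by ring]
  calc _ ≤ ENNReal.ofReal (B * m ^ (1 - 1 / p)) +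
      ENNReal.ofReal (1 / (p - 1) * (B * m ^ (1 - 1 / p))) := add_le_add h1 h2
    _ = _ := by
      have : 0 < p - 1 := by linarith
      rw [← ENNReal.ofReal_add (by positivity) (by positivity)]
      congr 1; ring

/-- the dual weighted norm -/
def PE (r : ℝ) (W f : ℝ → ℝ) : ℝ≥0∞ :=
  ∫⁻ x in Icc (-1:ℝ) 2, ENNReal.ofReal (|f x|) ^ (2 * r / (2 * r - 1)) *
          uE r W x ^ (-(1 / (2 * r - 1)))

lemma lemC {r A : ℝ} (hr1 : 1 < r) (hr2 : r < 2) (hA : 0 < A) (hWT : WT r A) {W : ℝ → ℝ} {δ : ℝ}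
    (hW : Reg W δ) {f : ℝ → ℝ} (hf : Nice f) (hfs : ∀ x, x ∉ Icc (-1:ℝ) 2 → f x = 0) :
    ∫⁻ x, ENNReal.ofReal |H0 f x| * ENNReal.ofReal (W x) ≤
      ENNReal.ofReal (64 * A) * ((∫⁻ x, ENNReal.ofReal (W x)) ^ (1 / (2 * r)) *
        PE r W f ^ ((2 * r - 1) / (2 * r))) := by
  have hHm := H0_measurable hf
  have hWm := hW.nice.continuous.measurable
  have hb : 0 < 2 * r - 1 := by linarith
  have hmt : (∫⁻ x, ENNReal.ofReal (W x)) ≠ ⊤ := by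
    have := hW.nice.integrable.lintegral_lt_top
    exact this.ne
  by_cases hm0 : (∫⁻ x, ENNReal.ofReal (W x)) = 0
  · rw [lintegral_eq_zero_iff (by fun_prop)] at hm0
    have : ∫⁻ x, ENNReal.ofReal |H0 f x| * ENNReal.ofReal (W x) = 0 := by
      rw [lintegral_eq_zero_iff (by fun_prop)]
      filter_upwards [hm0] with x hx
      simp only [Pi.zero_apply] at hx
      simp [hx]
    rw [this]; exact bot_le
  by_cases hP : PE r W f = ⊤
  · rw [hP, ENNReal.top_rpow_of_pos (by positivity), ENNReal.mul_top, ENNReal.mul_top]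
    · exact le_top
    · exact (ENNReal.ofReal_pos.2 (by positivity)).ne'
    · exact (ENNReal.rpow_pos (pos_iff_ne_zero.2 hm0) hmt).ne'
  set m := (∫⁻ x, ENNReal.ofReal (W x)) with hm
  set μ : Measure ℝ := volume.withDensity fun x => ENNReal.ofReal (W x) with hμ
  have hintg : ∫⁻ x, ENNReal.ofReal |H0 f x| * ENNReal.ofReal (W x) =
      ∫⁻ x, ENNReal.ofReal |H0 f x| ∂μ := by
    rw [hμ, lintegral_withDensity_eq_lintegral_mul _ (by fun_prop) (by fun_prop)]
    refine lintegral_congr fun x => ?_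
    rw [Pi.mul_apply, mul_comm]
  have hμu : μ univ = m := by
    rw [hμ, withDensity_apply _ MeasurableSet.univ, Measure.restrict_univ]
  set Pr := (PE r W f).toReal with hPr
  have hPE : PE r W f = ENNReal.ofReal Pr := (ENNReal.ofReal_toReal hP).symm
  have hPr0 : 0 ≤ Pr := ENNReal.toReal_nonneg
  set B := 16 * A * Pr ^ ((2 * r - 1) / (2 * r)) with hB
  have hB0 : 0 ≤ B := by positivity
  have hp : 1 < 2 * r / (2 * r - 1) := by rw [lt_div_iff₀ hb]; linarith
  have key : ∀ l : ℝ, 0 < l → μ {x | l < |H0 f x|} ≤ ENNReal.ofReal ((B / l) ^ (2 * r / (2 * r - 1))) := by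
    intro l hl
    have hE : MeasurableSet {x | l < |H0 f x|} := measurableSet_lt measurable_const hHm.abs
    have h1 := lemB hr1 hA hWT hW hf hfs hl
    rw [← withDensity_apply _ hE, ← hμ] at h1
    have het : μ {x | l < |H0 f x|} ≠ ⊤ :=
      ((measure_mono (subset_univ _)).trans_lt (hμu ▸ hmt.lt_top)).ne
    generalize μ {x | l < |H0 f x|} = e at h1 het
    rw [← PE, hPE] at h1
    lift e to NNReal using het
    have he : (e : ℝ≥0∞) = ENNReal.ofReal e := by simp
    have he0 : (0:ℝ) ≤ e := e.2
    rw [he] at h1 ⊢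
    generalize (e : ℝ) = t at h1 he0
    rw [← ENNReal.ofReal_ofNat 16, ← ENNReal.ofReal_mul hl.le, ← ENNReal.ofReal_mul (by norm_num),
      ENNReal.ofReal_rpow_of_nonneg (by positivity) (by positivity),
      ENNReal.ofReal_rpow_of_nonneg (by positivity) (by positivity),
      ← ENNReal.ofReal_mul (by positivity), ← ENNReal.ofReal_mul (by positivity),
      ENNReal.ofReal_le_ofReal_iff (by positivity)] at h1
    apply ENNReal.ofReal_le_ofReal
    rcases he0.eq_or_lt with h0 | h0
    · rw [← h0]; positivity
    have h16 : (16:ℝ) ^ (1 / (2 * r)) ≤ 16 := by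
      conv_rhs => rw [← Real.rpow_one 16]
      apply Real.rpow_le_rpow_of_exponent_le (by norm_num)
      rw [div_le_one (by linarith)]; linarith
    rw [Real.mul_rpow (by norm_num) he0] at h1
    have h2 : l * t ≤ B * t ^ (1 / (2 * r)) := by
      refine h1.trans ?_
      rw [hB]
      have : (0:ℝ) ≤ t ^ (1 / (2 * r)) := by positivity
      have h5 : (0:ℝ) ≤ A * Pr ^ ((2 * r - 1) / (2 * r)) := by positivity
      calc _ = (A * Pr ^ ((2 * r - 1) / (2 * r))) * ((16:ℝ) ^ (1 / (2 * r)) * t ^ (1 / (2 * r))) := by ring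
        _ ≤ (A * Pr ^ ((2 * r - 1) / (2 * r))) * (16 * t ^ (1 / (2 * r))) := by gcongr
        _ = _ := by ring
    have h3 : t ^ ((2 * r - 1) / (2 * r)) ≤ B / l := by
      rw [le_div_iff₀ hl]
      have h4 : t = t ^ ((2 * r - 1) / (2 * r)) * t ^ (1 / (2 * r)) := by
        rw [← Real.rpow_add h0, show (2 * r - 1) / (2 * r) + 1 / (2 * r) = 1 by field_simp; ring,
          Real.rpow_one]
      have h6 : (0:ℝ) < t ^ (1 / (2 * r)) := by positivity
      refine le_of_mul_le_mul_right ?_ h6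
      calc _ = l * (t ^ ((2 * r - 1) / (2 * r)) * t ^ (1 / (2 * r))) := by ring
        _ = l * t := by rw [← h4]
        _ ≤ _ := h2
    calc t = (t ^ ((2 * r - 1) / (2 * r))) ^ (2 * r / (2 * r - 1)) := by
          rw [← Real.rpow_mul he0, show (2 * r - 1) / (2 * r) * (2 * r / (2 * r - 1)) = 1 by field_simp,
            Real.rpow_one]
      _ ≤ _ := by gcongr
  have hmr : m = ENNReal.ofReal m.toReal := (ENNReal.ofReal_toReal hmt).symm
  rw [hintg]
  refine (lemC_num μ hHm.abs (fun x => abs_nonneg _) hp hB0 (ENNReal.toReal_nonneg (a := m)) key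
    (by rw [hμu]; exact hmr.le)).trans ?_
  rw [hmr, hPE]
  have hmt0 : 0 ≤ m.toReal := ENNReal.toReal_nonneg
  rw [ENNReal.toReal_ofReal hmt0]
  generalize m.toReal = M at hmt0
  rw [ENNReal.ofReal_rpow_of_nonneg (by positivity) (by positivity),
      ENNReal.ofReal_rpow_of_nonneg (by positivity) (by positivity),
      ← ENNReal.ofReal_mul (by positivity), ← ENNReal.ofReal_mul (by positivity)]
  apply ENNReal.ofReal_le_ofReal
  have e1 : 1 - 1 / (2 * r / (2 * r - 1)) = 1 / (2 * r) := by field_simp; ring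
  have e2 : 1 + 1 / (2 * r / (2 * r - 1) - 1) = 2 * r := by
    have : 2 * r / (2 * r - 1) - 1 = 1 / (2 * r - 1) := by field_simp; ring
    rw [this]; field_simp; ring
  rw [e1, e2, hB]
  have : 0 ≤ 16 * A * Pr ^ ((2 * r - 1) / (2 * r)) * M ^ (1 / (2 * r)) := by positivity
  calc _ ≤ 4 * (16 * A * Pr ^ ((2 * r - 1) / (2 * r)) * M ^ (1 / (2 * r))) := by gcongr; linarith
    _ = _ := by ring

/-- a Lipschitz cutoff -/
def cut (ρ x : ℝ) : ℝ := min 1 (max 0 (ρ - |x - 1 / 2|))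

lemma cut_nonneg (ρ x : ℝ) : 0 ≤ cut ρ x := le_min zero_le_one (le_max_left _ _)
lemma cut_le_one (ρ x : ℝ) : cut ρ x ≤ 1 := min_le_left _ _
lemma cut_eq_one {ρ x : ℝ} (h : |x - 1 / 2| ≤ ρ - 1) : cut ρ x = 1 :=
  min_eq_left (le_max_of_le_right (by linarith))
lemma cut_eq_zero {ρ x : ℝ} (h : ρ ≤ |x - 1 / 2|) : cut ρ x = 0 := by
  unfold cut
  rw [max_eq_left (by linarith)]; exact min_eq_right zero_le_one

lemma cut_lip (ρ : ℝ) : LipschitzWith 1 (cut ρ) := by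
  have h1 : LipschitzWith 1 fun x : ℝ => ρ - |x - 1 / 2| := by
    refine LipschitzWith.of_dist_le_mul fun x y => ?_
    rw [Real.dist_eq, Real.dist_eq, NNReal.coe_one, one_mul]
    have := abs_abs_sub_abs_le_abs_sub (y - 1 / 2) (x - 1 / 2)
    rw [show y - 1 / 2 - (x - 1 / 2) = -(x - y) by ring, abs_neg] at this
    rwa [show ρ - |x - 1 / 2| - (ρ - |y - 1 / 2|) = |y - 1 / 2| - |x - 1 / 2| by ring]
  exact (h1.const_max 0).const_min 1

lemma cut_smul_lip (ρ K : ℝ) : ∃ L : NNReal, LipschitzWith L fun x => K * cut ρ x := by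
  refine ⟨‖K‖₊, LipschitzWith.of_dist_le_mul fun x y => ?_⟩
  have := (cut_lip ρ).dist_le_mul x y
  rw [Real.dist_eq, ← mul_sub, abs_mul]
  rw [Real.dist_eq, NNReal.coe_one, one_mul] at this
  simp only [coe_nnnorm, Real.norm_eq_abs]
  gcongr

lemma cut_smul_nice {ρ : ℝ} (hρ : 0 < ρ) (K : ℝ) : Nice fun x => K * cut ρ x := by
  refine ⟨cut_smul_lip ρ K, ρ + 1, by positivity, fun x hx => ?_⟩
  rw [cut_eq_zero, mul_zero]
  have := abs_sub_abs_le_abs_sub x (1 / 2)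
  rw [abs_of_pos (by norm_num : (0:ℝ) < 1 / 2)] at this
  linarith

lemma smooth_nice {g : ℝ → ℝ} (hg : HasCompactSupport g) (hg' : ContDiff ℝ (⊤ : ℕ∞) g) : Nice g := by
  refine ⟨hg'.lipschitzWith_of_hasCompactSupport hg (by simp), ?_⟩
  obtain ⟨R, hR⟩ := hg.isCompact.isBounded.subset_closedBall (0:ℝ)
  refine ⟨|R| + 1, by positivity, fun x hx => ?_⟩
  by_contra h
  have := hR (subset_tsupport _ h)
  rw [Metric.mem_closedBall, dist_zero_right, Real.norm_eq_abs] at this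
  have := le_abs_self R
  linarith

lemma approx_bdd {f : ℝ → ℝ} (hf : Measurable f) {K : ℝ} (hK : 0 < K) (hfK : ∀ x, |f x| ≤ K)
    (hfs : ∀ x, x ∉ Icc (0:ℝ) 1 → f x = 0) :
    ∃ F : ℕ → ℝ → ℝ, (∀ n, Nice (F n)) ∧ (∀ n x, |F n x| ≤ K) ∧
      (∀ n x, x ∉ Icc (-1:ℝ) 2 → F n x = 0) ∧
      ∀ᵐ x, Tendsto (fun n => F n x) atTop (𝓝 (f x)) := by
  have hmem : MemLp f 1 := by
    rw [memLp_one_iff_integrable]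
    have h1 : Integrable ((Icc (0:ℝ) 1).indicator fun _ => K) := by
      rw [integrable_indicator_iff measurableSet_Icc]
      exact integrableOn_const (by simp)
    refine h1.mono' hf.aestronglyMeasurable (Eventually.of_forall fun x => ?_)
    by_cases hx : x ∈ Icc (0:ℝ) 1
    · rw [indicator_of_mem hx]; exact hfK x
    · rw [indicator_of_notMem hx, hfs x hx]; simp
  have hex : ∀ n : ℕ, ∃ g : ℝ → ℝ, HasCompactSupport g ∧ ContDiff ℝ (⊤ : ℕ∞) g ∧
      eLpNorm (f - g) 1 ≤ ENNReal.ofReal (1 / ((n:ℝ) + 1)) := fun n =>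
    MemLp.exist_eLpNorm_sub_le (by simp) le_rfl hmem (by positivity)
  choose g hg1 hg2 hg3 using hex
  have hgm : ∀ n, Nice (g n) := fun n => smooth_nice (hg1 n) (hg2 n)
  have hT : TendstoInMeasure volume g atTop f := by
    refine tendstoInMeasure_of_tendsto_eLpNorm (p := 1) one_ne_zero
      (fun n => (hgm n).continuous.aestronglyMeasurable) hf.aestronglyMeasurable ?_
    refine tendsto_of_tendsto_of_tendsto_of_le_of_le tendsto_const_nhds ?_ (fun n => bot_le)
      (fun n => ?_) (h := fun n : ℕ => ENNReal.ofReal (1 / ((n:ℝ) + 1)))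
    · rw [← ENNReal.ofReal_zero]
      exact ENNReal.tendsto_ofReal tendsto_one_div_add_atTop_nhds_zero_nat
    · rw [eLpNorm_sub_comm]; exact hg3 n
  obtain ⟨ns, hns, hae⟩ := hT.exists_seq_tendsto_ae
  refine ⟨fun n x => max (-K * cut (3 / 2) x) (min (g (ns n) x) (K * cut (3 / 2) x)), ?_, ?_, ?_, ?_⟩
  · intro n
    obtain ⟨L1, hL1⟩ := cut_smul_lip (3 / 2) (-K)
    obtain ⟨L2, hL2⟩ := cut_smul_lip (3 / 2) K
    obtain ⟨L3, hL3⟩ := (hgm (ns n)).lip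
    refine ⟨⟨_, hL1.max (hL3.min hL2)⟩, ?_⟩
    obtain ⟨R, hR, hs⟩ := (cut_smul_nice (ρ := 3 / 2) (by norm_num) K).supp
    refine ⟨R, hR, fun x hx => ?_⟩
    have := hs x hx
    have h0 : cut (3 / 2) x = 0 := by
      rcases mul_eq_zero.1 this with h | h
      · exact absurd h hK.ne'
      · exact h
    simp [h0]
  · intro n x
    have h0 := cut_nonneg (3 / 2) x
    have h1 := cut_le_one (3 / 2) x
    have : K * cut (3 / 2) x ≤ K := by nlinarith
    have : 0 ≤ K * cut (3 / 2) x := by positivity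
    rw [abs_le]
    constructor
    · exact le_max_of_le_left (by linarith)
    · exact max_le (by linarith) ((min_le_right _ _).trans (by linarith))
  · intro n x hx
    have h0 : cut (3 / 2) x = 0 := by
      apply cut_eq_zero
      rw [le_abs]
      by_contra h
      push Not at h
      exact hx ⟨by linarith, by linarith⟩
    simp [h0]
  · filter_upwards [hae] with x hx
    have : f x = max (-K * cut (3 / 2) x) (min (f x) (K * cut (3 / 2) x)) := by
      by_cases h : x ∈ Icc (0:ℝ) 1
      · rw [cut_eq_one (by rw [abs_le]; constructor <;> linarith [h.1, h.2])]
        have := abs_le.1 (hfK x)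
        rw [min_eq_left (by linarith), max_eq_right (by linarith)]
      · rw [hfs x h]
        have h0 := cut_nonneg (3 / 2) x
        have : 0 ≤ K * cut (3 / 2) x := by positivity
        rw [min_eq_left (by linarith), max_eq_right (by linarith)]
    conv => rhs; rw [this]
    exact tendsto_const_nhds.max (hx.min tendsto_const_nhds)

lemma lemD1 {r A : ℝ} (hr1 : 1 < r) (hr2 : r < 2) (hA : 0 < A) (hWT : WT r A) {W : ℝ → ℝ} {δ : ℝ}
    (hW : Reg W δ) {f : ℝ → ℝ} (hf : Nice f) (hfs : ∀ x, x ∉ Icc (-1:ℝ) 2 → f x = 0) :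
    ENNReal.ofReal |∫ x, f x * H0 W x| ≤
      ENNReal.ofReal (64 * A) * ((∫⁻ x, ENNReal.ofReal (W x)) ^ (1 / (2 * r)) *
        PE r W f ^ ((2 * r - 1) / (2 * r))) := by
  refine le_trans ?_ (lemC hr1 hr2 hA hWT hW hf hfs)
  rw [H0_antisymm hW.nice hf, abs_neg, ← Real.norm_eq_abs, ofReal_norm]
  refine (enorm_integral_le_lintegral_enorm _).trans (le_of_eq (lintegral_congr fun x => ?_))
  rw [enorm_mul, Real.enorm_eq_ofReal (hW.nonneg x), Real.enorm_eq_ofReal_abs, mul_comm]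

lemma lemD {r A : ℝ} (hr1 : 1 < r) (hr2 : r < 2) (hA : 0 < A) (hWT : WT r A) {W : ℝ → ℝ} {δ : ℝ}
    (hW : Reg W δ) {f : ℝ → ℝ} (hf : Measurable f) {K : ℝ} (hK : 0 < K) (hfK : ∀ x, |f x| ≤ K)
    (hfs : ∀ x, x ∉ Icc (0:ℝ) 1 → f x = 0) :
    ENNReal.ofReal |∫ x, f x * H0 W x| ≤
      ENNReal.ofReal (64 * A) * ((∫⁻ x, ENNReal.ofReal (W x)) ^ (1 / (2 * r)) *
        PE r W f ^ ((2 * r - 1) / (2 * r))) := by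
  obtain ⟨F, hF1, hF2, hF3, hF4⟩ := approx_bdd hf hK hfK hfs
  have hb : 0 < 2 * r - 1 := by linarith
  have hmt : (∫⁻ x, ENNReal.ofReal (W x)) ≠ ⊤ := by
    have := hW.nice.integrable.lintegral_lt_top
    exact this.ne
  obtain ⟨S, hS, hSb⟩ := H0_bound hW.nice 2
  have hHm := H0_measurable hW.nice
  have hum := uE_measurable r hW.nice.continuous.measurable
  obtain ⟨c, C, hc, hC, hcC⟩ := hW.uE_bd hr1
  have hL : Tendsto (fun n => ENNReal.ofReal |∫ x, F n x * H0 W x|) atTop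
      (𝓝 (ENNReal.ofReal |∫ x, f x * H0 W x|)) := by
    refine ENNReal.tendsto_ofReal (Tendsto.abs ?_)
    refine tendsto_integral_of_dominated_convergence
      ((Icc (-1:ℝ) 2).indicator fun _ => K * S) ?_ ?_ ?_ ?_
    · intro n
      exact ((hF1 n).continuous.measurable.mul hHm).aestronglyMeasurable
    · rw [integrable_indicator_iff measurableSet_Icc]
      exact integrableOn_const (by simp)
    · intro n
      refine Eventually.of_forall fun x => ?_
      by_cases hx : x ∈ Icc (-1:ℝ) 2
      · rw [indicator_of_mem hx, Real.norm_eq_abs, abs_mul]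
        have : |x| ≤ 2 := by rw [abs_le]; constructor <;> linarith [hx.1, hx.2]
        gcongr
        · exact hF2 n x
        · exact hSb x this
      · rw [indicator_of_notMem hx, hF3 n x hx]; simp
    · filter_upwards [hF4] with x hx
      exact hx.mul_const _
  have hPl : Tendsto (fun n => PE r W (F n)) atTop (𝓝 (PE r W f)) := by
    unfold PE
    refine tendsto_lintegral_of_dominated_convergence
      (fun _ => ENNReal.ofReal K ^ (2 * r / (2 * r - 1)) * (ENNReal.ofReal c) ^ (-(1 / (2 * r - 1))))
      ?_ ?_ ?_ ?_
    · intro n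
      have := (hF1 n).continuous.measurable
      exact ((this.abs.ennreal_ofReal).pow_const _).mul (hum.pow_const _)
    · intro n
      refine (ae_restrict_iff' measurableSet_Icc).2 (Eventually.of_forall fun x hx => ?_)
      refine mul_le_mul' ?_ ?_
      · exact ENNReal.rpow_le_rpow (ENNReal.ofReal_le_ofReal (hF2 n x)) (by positivity)
      · rw [ENNReal.rpow_neg, ENNReal.rpow_neg]
        gcongr
        exact (hcC x hx).1
    · rw [lintegral_const]
      refine ENNReal.mul_ne_top (ENNReal.mul_ne_top ?_ ?_) ?_
      · exact (ENNReal.rpow_lt_top_of_nonneg (by positivity) ENNReal.ofReal_ne_top).ne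
      · rw [ENNReal.rpow_neg]
        refine ENNReal.inv_ne_top.2 (ENNReal.rpow_pos (ENNReal.ofReal_pos.2 hc) ENNReal.ofReal_ne_top).ne'
      · simp
    · refine (ae_restrict_iff' measurableSet_Icc).2 ?_
      filter_upwards [hF4] with x hx hxI
      have hu0 : uE r W x ≠ 0 :=
          (lt_of_lt_of_le (ENNReal.ofReal_pos.2 hc) (hcC x hxI).1).ne'
      refine ENNReal.Tendsto.mul_const ?_ (Or.inr ?_)
      · exact ((ENNReal.continuous_rpow_const).tendsto _).comp (ENNReal.tendsto_ofReal hx.abs)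
      · rw [ENNReal.rpow_neg]
        refine ENNReal.inv_ne_top.2 (ENNReal.rpow_pos (pos_iff_ne_zero.2 hu0) ?_).ne'
        exact ((hcC x hxI).2.trans_lt ENNReal.ofReal_lt_top).ne
  refine le_of_tendsto_of_tendsto' hL ?_ (fun n => lemD1 hr1 hr2 hA hWT hW (hF1 n) (hF3 n))
  refine ENNReal.Tendsto.const_mul (ENNReal.Tendsto.const_mul ?_ (Or.inr ?_)) (Or.inr ENNReal.ofReal_ne_top)
  · exact ((ENNReal.continuous_rpow_const).tendsto _).comp hPl
  · exact (ENNReal.rpow_lt_top_of_nonneg (by positivity) hmt).ne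

lemma lemX {r A : ℝ} (hr1 : 1 < r) (hr2 : r < 2) (hA : 0 < A) (hWT : WT r A) {W : ℝ → ℝ} {δ : ℝ}
    (hW : Reg W δ) :
    ∫⁻ x in Icc (0:ℝ) 1, ENNReal.ofReal |H0 W x| ^ (2 * r) * uE r W x ≤
      ENNReal.ofReal (64 * A) ^ (2 * r) * ∫⁻ x, ENNReal.ofReal (W x) := by
  have hb : 0 < 2 * r - 1 := by linarith
  obtain ⟨S, hS, hSb⟩ := H0_bound hW.nice 2
  have hHm := H0_measurable hW.nice
  have hum := uE_measurable r hW.nice.continuous.measurable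
  obtain ⟨c, C, hc, hC, hcC⟩ := hW.uE_bd hr1
  have hsub : ∀ x ∈ Icc (0:ℝ) 1, x ∈ Icc (-1:ℝ) 2 := fun x hx => ⟨by linarith [hx.1], by linarith [hx.2]⟩
  have hsub2 : ∀ x ∈ Icc (0:ℝ) 1, |x| ≤ 2 := fun x hx => by
    rw [abs_le]; constructor <;> linarith [hx.1, hx.2]
  have huR : ∀ x ∈ Icc (0:ℝ) 1, uE r W x = ENNReal.ofReal (uR r W x) := fun x hx =>
    (ENNReal.ofReal_toReal ((hcC x (hsub x hx)).2.trans_lt ENNReal.ofReal_lt_top).ne).symm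
  have huRC : ∀ x ∈ Icc (0:ℝ) 1, uR r W x ≤ C := fun x hx => by
    have := (hcC x (hsub x hx)).2
    rw [huR x hx, ENNReal.ofReal_le_ofReal_iff hC.le] at this
    exact this
  have huRc : ∀ x ∈ Icc (0:ℝ) 1, 0 < uR r W x := fun x hx => by
    have := (hcC x (hsub x hx)).1
    rw [huR x hx] at this
    exact ENNReal.ofReal_pos.1 ((ENNReal.ofReal_pos.2 hc).trans_le this)
  have huR0 : ∀ x, 0 ≤ uR r W x := fun x => ENNReal.toReal_nonneg
  have huRm : Measurable (uR r W) := hum.ennreal_toReal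
  set X := ∫⁻ x in Icc (0:ℝ) 1, ENNReal.ofReal |H0 W x| ^ (2 * r) * uE r W x with hX
  have hXt : X ≠ ⊤ := by
    refine ne_of_lt ?_
    calc X ≤ ∫⁻ x in Icc (0:ℝ) 1, ENNReal.ofReal S ^ (2 * r) * ENNReal.ofReal C := by
          refine setLIntegral_mono' measurableSet_Icc fun x hx => ?_
          refine mul_le_mul' ?_ (hcC x (hsub x hx)).2
          exact ENNReal.rpow_le_rpow (ENNReal.ofReal_le_ofReal (hSb x (hsub2 x hx))) (by positivity)
      _ < ⊤ := by
          rw [setLIntegral_const]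
          refine ENNReal.mul_lt_top (ENNReal.mul_lt_top ?_ ENNReal.ofReal_lt_top) (by simp)
          exact ENNReal.rpow_lt_top_of_nonneg (by positivity) ENNReal.ofReal_ne_top
  set f : ℝ → ℝ := (Icc (0:ℝ) 1).indicator fun x => |H0 W x| ^ (2 * r - 2) * H0 W x * uR r W x with hf
  have hfm : Measurable f :=
    (((hHm.abs.pow_const _).mul hHm).mul huRm).indicator measurableSet_Icc
  have habs : ∀ x ∈ Icc (0:ℝ) 1, |f x| = |H0 W x| ^ (2 * r - 1) * uR r W x := by
    intro x hx
    rw [hf, indicator_of_mem hx, abs_mul, abs_mul, abs_of_nonneg (huR0 x),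
      abs_of_nonneg (Real.rpow_nonneg (abs_nonneg _) _)]
    congr 1
    rw [← Real.rpow_add_one' (abs_nonneg _) (by linarith)]
    congr 1; ring
  have hfb : ∀ x, |f x| ≤ S ^ (2 * r - 1) * C := by
    intro x
    by_cases hx : x ∈ Icc (0:ℝ) 1
    · rw [habs x hx]
      gcongr
      · exact huR0 x
      · exact hSb x (hsub2 x hx)
      · exact huRC x hx
    · rw [hf, indicator_of_notMem hx, abs_zero]; positivity
  have hintg : ENNReal.ofReal |∫ x, f x * H0 W x| = X := by
    have hprod : ∀ x, f x * H0 W x =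
        (Icc (0:ℝ) 1).indicator (fun x => |H0 W x| ^ (2 * r) * uR r W x) x := by
      intro x
      by_cases hx : x ∈ Icc (0:ℝ) 1
      · rw [hf, indicator_of_mem hx, indicator_of_mem hx]
        have : |H0 W x| ^ (2 * r) = |H0 W x| ^ (2 * r - 2) * (H0 W x * H0 W x) := by
          rw [← abs_mul_abs_self (H0 W x), ← mul_assoc, ← Real.rpow_add_one' (abs_nonneg _) (by linarith),
            ← Real.rpow_add_one' (abs_nonneg _) (by linarith)]
          congr 1; ring
        rw [this]; ring
      · rw [hf, indicator_of_notMem hx, indicator_of_notMem hx, zero_mul]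
    simp_rw [hprod]
    rw [integral_indicator measurableSet_Icc, integral_eq_lintegral_of_nonneg_ae]
    · have : ∫⁻ x in Icc (0:ℝ) 1, ENNReal.ofReal (|H0 W x| ^ (2 * r) * uR r W x) = X := by
        refine setLIntegral_congr_fun measurableSet_Icc fun x hx => ?_
        rw [huR x hx, ENNReal.ofReal_rpow_of_nonneg (abs_nonneg _) (by positivity),
          ← ENNReal.ofReal_mul (by positivity)]
      rw [this, abs_of_nonneg ENNReal.toReal_nonneg, ENNReal.ofReal_toReal hXt]
    · refine Eventually.of_forall fun x => ?_
      have := huR0 x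
      show 0 ≤ _
      positivity
    · exact ((hHm.abs.pow_const _).mul huRm).aestronglyMeasurable
  have hPE : PE r W f = X := by
    unfold PE
    have : ∀ x ∈ Icc (-1:ℝ) 2, ENNReal.ofReal (|f x|) ^ (2 * r / (2 * r - 1)) *
          uE r W x ^ (-(1 / (2 * r - 1))) =
        (Icc (0:ℝ) 1).indicator (fun x => ENNReal.ofReal |H0 W x| ^ (2 * r) * uE r W x) x := by
      intro x _
      by_cases hx : x ∈ Icc (0:ℝ) 1
      · have hu := huRc x hx
        rw [indicator_of_mem hx, habs x hx, huR x hx, ENNReal.ofReal_rpow_of_nonneg (by positivity) (by positivity),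
          ENNReal.ofReal_rpow_of_pos hu, ENNReal.ofReal_rpow_of_nonneg (by positivity) (by positivity),
          ← ENNReal.ofReal_mul (by positivity), ← ENNReal.ofReal_mul (by positivity)]
        congr 1
        rw [Real.mul_rpow (by positivity) hu.le, ← Real.rpow_mul (abs_nonneg _), mul_assoc,
          ← Real.rpow_add hu]
        rw [show (2 * r - 1) * (2 * r / (2 * r - 1)) = 2 * r by field_simp,
          show 2 * r / (2 * r - 1) + -(1 / (2 * r - 1)) = 1 by field_simp; ring, Real.rpow_one]
      · rw [indicator_of_notMem hx, hf, indicator_of_notMem hx, abs_zero, ENNReal.ofReal_zero,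
          ENNReal.zero_rpow_of_pos (by positivity), zero_mul]
    rw [setLIntegral_congr_fun measurableSet_Icc this, lintegral_indicator measurableSet_Icc,
      Measure.restrict_restrict measurableSet_Icc, inter_eq_left.2 (fun x hx => hsub x hx)]
  have hD := lemD hr1 hr2 hA hWT hW hfm (K := S ^ (2 * r - 1) * C) (by positivity) hfb
    (fun x hx => by rw [hf, indicator_of_notMem hx])
  rw [hintg, hPE] at hD
  by_cases hX0 : X = 0
  · rw [hX0]; exact bot_le
  set m := ∫⁻ x, ENNReal.ofReal (W x)
  have hsplit : X = X ^ (1 / (2 * r)) * X ^ ((2 * r - 1) / (2 * r)) := by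
    rw [← ENNReal.rpow_add _ _ hX0 hXt, show 1 / (2 * r) + (2 * r - 1) / (2 * r) = 1 by field_simp; ring,
      ENNReal.rpow_one]
  have hY0 : X ^ ((2 * r - 1) / (2 * r)) ≠ 0 := (ENNReal.rpow_pos (pos_iff_ne_zero.2 hX0) hXt).ne'
  have hYt : X ^ ((2 * r - 1) / (2 * r)) ≠ ⊤ :=
    (ENNReal.rpow_lt_top_of_nonneg (by positivity) hXt).ne
  have h1 : X ^ (1 / (2 * r)) ≤ ENNReal.ofReal (64 * A) * m ^ (1 / (2 * r)) := by
    refine (ENNReal.mul_le_mul_iff_left hY0 hYt).1 ?_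
    rw [← hsplit, mul_assoc]; exact hD
  calc X = (X ^ (1 / (2 * r))) ^ (2 * r) := by
        rw [← ENNReal.rpow_mul, show 1 / (2 * r) * (2 * r) = 1 by field_simp, ENNReal.rpow_one]
    _ ≤ (ENNReal.ofReal (64 * A) * m ^ (1 / (2 * r))) ^ (2 * r) := by gcongr
    _ = _ := by
      rw [ENNReal.mul_rpow_of_nonneg _ _ (by positivity), ← ENNReal.rpow_mul,
        show 1 / (2 * r) * (2 * r) = 1 by field_simp, ENNReal.rpow_one]

lemma beta_le_alpha {r : ℝ} (hr1 : 1 < r) (hr2 : r < 2) : 2 * r - 1 ≤ r / (2 - r) := by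
  rw [le_div_iff₀ (by linarith)]
  nlinarith [sq_nonneg (r - 1)]

lemma ptE {r : ℝ} (hr1 : 1 < r) (hr2 : r < 2) {p w N a : ℝ} (hp : 0 ≤ p) (hw : 0 < w) (hN : 0 < N)
    (hwa : w ≤ a) (hNa : N ≤ a ^ (2 * r - 1)) :
    (p / a ^ (r / (2 - r) / r)) ^ 2 * w ^ (r / (2 - r)) ≤
      (p ^ (2 * r) * (w ^ (2 * r - 1) / N ^ 2)) ^ (1 / r) * w ^ (1 - 1 / r) := by
  have ha : 0 < a := hw.trans_le hwa
  have h2r : 0 < 2 - r := by linarith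
  have hba := beta_le_alpha hr1 hr2
  set α := r / (2 - r) with hα
  have e0 : α - (3 - 2 / r) = 2 * (α - (2 * r - 1)) / r := by
    rw [hα]; field_simp; ring
  have e1 : w ^ (α - (3 - 2 / r)) ≤ a ^ (α - (3 - 2 / r)) := by
    refine Real.rpow_le_rpow hw.le hwa ?_
    rw [e0]
    have : 0 ≤ α - (2 * r - 1) := by linarith
    positivity
  have e2 : (N ^ 2) ^ (1 / r) ≤ a ^ (2 * (2 * r - 1) / r) := by
    calc (N ^ 2) ^ (1 / r) ≤ ((a ^ (2 * r - 1)) ^ 2) ^ (1 / r) := by gcongr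
      _ = _ := by
        rw [← Real.rpow_natCast, ← Real.rpow_mul ha.le, ← Real.rpow_mul ha.le]
        congr 1; push_cast; ring
  have e3 : (p / a ^ (α / r)) ^ 2 = p ^ 2 * a ^ (-(2 * α / r)) := by
    rw [div_pow, Real.rpow_neg ha.le, ← Real.rpow_natCast (a ^ (α / r)), ← Real.rpow_mul ha.le,
      div_eq_mul_inv]
    congr 3; push_cast; ring
  have e4 : (p ^ (2 * r) * (w ^ (2 * r - 1) / N ^ 2)) ^ (1 / r) =
      p ^ 2 * (w ^ ((2 * r - 1) / r) / (N ^ 2) ^ (1 / r)) := by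
    rw [Real.mul_rpow (by positivity) (by positivity), Real.div_rpow (by positivity) (by positivity),
      ← Real.rpow_mul hp, ← Real.rpow_mul hw.le, mul_one_div, mul_one_div,
      show 2 * r / r = ((2:ℕ):ℝ) by field_simp; norm_num, Real.rpow_natCast]
  rw [e3, e4, mul_assoc, mul_assoc]
  refine mul_le_mul_of_nonneg_left ?_ (by positivity)
  calc a ^ (-(2 * α / r)) * w ^ α = a ^ (-(2 * α / r)) * (w ^ (α - (3 - 2 / r)) * w ^ (3 - 2 / r)) := by
        rw [← Real.rpow_add hw]; congr 2; ring
    _ ≤ a ^ (-(2 * α / r)) * (a ^ (α - (3 - 2 / r)) * w ^ (3 - 2 / r)) := by gcongr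
    _ = w ^ (3 - 2 / r) / a ^ (2 * (2 * r - 1) / r) := by
        rw [← mul_assoc, ← Real.rpow_add ha, div_eq_mul_inv (w ^ (3 - 2 / r)), ← Real.rpow_neg ha.le, mul_comm]
        congr 2
        rw [e0]; ring
    _ ≤ w ^ (3 - 2 / r) / (N ^ 2) ^ (1 / r) := by gcongr
    _ = _ := by
        rw [div_mul_eq_mul_div, ← Real.rpow_add hw]
        congr 2
        field_simp; ring

lemma lemE {r A : ℝ} (hr1 : 1 < r) (hr2 : r < 2) (hA : 0 < A) (hWT : WT r A) {W : ℝ → ℝ} {δ : ℝ}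
    (hW : Reg W δ) :
    ∫⁻ x in Icc (0:ℝ) 1, (ENNReal.ofReal |H0 W x| / Mr (r / (2 - r)) W x ^ ((r / (2 - r)) / r)) ^ 2 *
              ENNReal.ofReal (W x ^ (r / (2 - r))) ≤
      ENNReal.ofReal (4096 * A ^ 2) * ∫⁻ x, ENNReal.ofReal (W x) := by
  have hb : 0 < 2 * r - 1 := by linarith
  have h2r : 0 < 2 - r := by linarith
  have hba := beta_le_alpha hr1 hr2
  have hα0 : 0 < r / (2 - r) := by positivity
  have hHm := H0_measurable hW.nice
  have hWm := hW.nice.continuous.measurable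
  have hum := uE_measurable r hWm
  obtain ⟨K1, hK1, hK1b⟩ := hW.HL_le hα0
  obtain ⟨K2, hK2, hK2b⟩ := hW.HL_le hb
  have hpt : ∀ x ∈ Icc (0:ℝ) 1,
      (ENNReal.ofReal |H0 W x| / Mr (r / (2 - r)) W x ^ ((r / (2 - r)) / r)) ^ 2 *
              ENNReal.ofReal (W x ^ (r / (2 - r))) ≤
      (ENNReal.ofReal |H0 W x| ^ (2 * r) * uE r W x) ^ (1 / r) * ENNReal.ofReal (W x) ^ (1 - 1 / r) := by
    intro x hx
    have hWx : 0 < W x := hW.pos.trans_le (hW.low x ⟨by linarith [hx.1], by linarith [hx.2]⟩)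
    have hfun : ∀ s : ℝ, (fun y => |W y| ^ s) = fun y => W y ^ s := fun s =>
      funext fun y => by rw [abs_of_nonneg (hW.nonneg y)]
    have hMt : Mr (r / (2 - r)) W x ≠ ⊤ := by
      unfold Mr
      rw [hfun]
      exact (ENNReal.rpow_lt_top_of_nonneg (by positivity) ((hK1b x).trans_lt ENNReal.ofReal_lt_top).ne).ne
    have hNt : HLMax (fun y => W y ^ (2 * r - 1)) x ≠ ⊤ := ((hK2b x).trans_lt ENNReal.ofReal_lt_top).ne
    have hwa : ENNReal.ofReal (W x) ≤ Mr (r / (2 - r)) W x := by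
      unfold Mr
      rw [hfun]
      calc ENNReal.ofReal (W x) = ENNReal.ofReal (W x ^ (r / (2 - r))) ^ (1 / (r / (2 - r))) := by
            rw [ENNReal.ofReal_rpow_of_nonneg (by positivity) (by positivity), ← Real.rpow_mul hWx.le,
              mul_one_div_cancel hα0.ne', Real.rpow_one]
        _ ≤ _ := by gcongr; exact hW.le_HL hα0 x
    have hN0 := hW.le_HL hb x
    have hNa : HLMax (fun y => W y ^ (2 * r - 1)) x ≤ Mr (r / (2 - r)) W x ^ (2 * r - 1) := by
      have h := Mr_mono_exp (2 * r - 1) (r / (2 - r)) hb hba W hWm.aemeasurable x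
      calc HLMax (fun y => W y ^ (2 * r - 1)) x = Mr (2 * r - 1) W x ^ (2 * r - 1) := by
            unfold Mr
            rw [hfun, ← ENNReal.rpow_mul, one_div_mul_cancel hb.ne', ENNReal.rpow_one]
        _ ≤ _ := by gcongr
    unfold uE
    generalize Mr (r / (2 - r)) W x = a at *
    generalize HLMax (fun y => W y ^ (2 * r - 1)) x = N at *
    lift a to NNReal using hMt
    lift N to NNReal using hNt
    have ea : (a : ℝ≥0∞) = ENNReal.ofReal a := by simp
    have eN : (N : ℝ≥0∞) = ENNReal.ofReal N := by simp
    have hWb : 0 < W x ^ (2 * r - 1) := by positivity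
    rw [ea] at hwa hNa ⊢
    rw [eN] at hNa hN0 ⊢
    rw [ENNReal.ofReal_le_ofReal_iff a.coe_nonneg] at hwa
    have ha0 : (0:ℝ) < a := hWx.trans_le hwa
    rw [ENNReal.ofReal_rpow_of_pos ha0, ENNReal.ofReal_le_ofReal_iff (by positivity)] at hNa
    rw [ENNReal.ofReal_le_ofReal_iff N.coe_nonneg] at hN0
    have hNp : (0:ℝ) < N := hWb.trans_le hN0
    have := ptE hr1 hr2 (abs_nonneg (H0 W x)) hWx hNp hwa hNa
    rw [ENNReal.ofReal_rpow_of_pos ha0, ← ENNReal.ofReal_div_of_pos (by positivity),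
      ← ENNReal.ofReal_pow (by positivity), ← ENNReal.ofReal_mul (by positivity),
      ENNReal.ofReal_rpow_of_nonneg (abs_nonneg _) (by positivity),
      ← ENNReal.ofReal_pow (by positivity), ← ENNReal.ofReal_div_of_pos (by positivity),
      ← ENNReal.ofReal_mul (by positivity), ENNReal.ofReal_rpow_of_nonneg (by positivity) (by positivity),
      ENNReal.ofReal_rpow_of_pos hWx, ← ENNReal.ofReal_mul (by positivity)]
    exact ENNReal.ofReal_le_ofReal this
  have hr' : 0 ≤ 1 - 1 / r := by
    rw [sub_nonneg, div_le_one (by linarith)]; exact hr1.le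
  refine (setLIntegral_mono' measurableSet_Icc hpt).trans ?_
  refine (ENNReal.lintegral_mul_norm_pow_le (by fun_prop) (by fun_prop) (by positivity) hr' (by ring)).trans ?_
  set m := ∫⁻ x, ENNReal.ofReal (W x) with hm
  calc _ ≤ (ENNReal.ofReal (64 * A) ^ (2 * r) * m) ^ (1 / r) * m ^ (1 - 1 / r) := by
        gcongr
        · exact lemX hr1 hr2 hA hWT hW
        · exact setLIntegral_le_lintegral _ _
    _ = ENNReal.ofReal (64 * A) ^ (2:ℕ) * (m ^ (1 / r) * m ^ (1 - 1 / r)) := by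
        rw [ENNReal.mul_rpow_of_nonneg _ _ (by positivity), ← ENNReal.rpow_mul,
          show 2 * r * (1 / r) = ((2:ℕ):ℝ) by field_simp; norm_num, ENNReal.rpow_natCast, mul_assoc]
    _ = _ := by
        rw [← ENNReal.rpow_add_of_nonneg _ _ (by positivity) hr', show 1 / r + (1 - 1 / r) = 1 by ring,
          ENNReal.rpow_one, ← ENNReal.ofReal_pow (by positivity)]
        congr 2; ring

lemma cut_norm {α δ : ℝ} (hα : 1 ≤ α) (hδ0 : 0 < δ) :
    eLpNorm (fun x => δ * cut (5 / 2) x) (ENNReal.ofReal α) ≤ ENNReal.ofReal (5 * δ) := by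
  have hα0 : 0 < α := by linarith
  have hpt : (ENNReal.ofReal α).toReal = α := ENNReal.toReal_ofReal hα0.le
  have h1 : eLpNorm (fun x => δ * cut (5 / 2) x) (ENNReal.ofReal α) ≤
      eLpNorm ((Icc (-2:ℝ) 3).indicator fun _ => δ) (ENNReal.ofReal α) := by
    refine eLpNorm_mono fun x => ?_
    by_cases hx : x ∈ Icc (-2:ℝ) 3
    · rw [indicator_of_mem hx, norm_mul, Real.norm_eq_abs (cut _ _), abs_of_nonneg (cut_nonneg _ _)]
      exact mul_le_of_le_one_right (norm_nonneg _) (cut_le_one _ _)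
    · rw [indicator_of_notMem hx, cut_eq_zero]
      · simp
      · rw [le_abs]
        by_contra h
        push Not at h
        exact hx ⟨by linarith, by linarith⟩
  have h2 : eLpNorm ((Icc (-2:ℝ) 3).indicator fun _ => δ) (ENNReal.ofReal α) ≤
      ‖δ‖ₑ * volume (Icc (-2:ℝ) 3) ^ (1 / (ENNReal.ofReal α).toReal) :=
    eLpNorm_indicator_const_le (s := Icc (-2:ℝ) 3) δ (ENNReal.ofReal α)
  refine (h1.trans h2).trans ?_
  rw [Real.enorm_eq_ofReal hδ0.le, Real.volume_Icc, hpt, mul_comm 5 δ, ENNReal.ofReal_mul hδ0.le]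
  refine mul_le_mul' le_rfl ?_
  rw [show (3:ℝ) - -2 = 5 by norm_num, ENNReal.ofReal_rpow_of_pos (by norm_num)]
  apply ENNReal.ofReal_le_ofReal
  calc (5:ℝ) ^ (1 / α) ≤ 5 ^ (1:ℝ) := by
        apply Real.rpow_le_rpow_of_exponent_le (by norm_num)
        rw [one_div]; exact inv_le_one_of_one_le₀ hα
    _ = 5 := Real.rpow_one 5

lemma norm_one {α : ℝ} (hα : 1 ≤ α) {F : ℝ → ℝ} (hF : AEStronglyMeasurable F)
    (hsupp : Function.support F ⊆ Icc (-2:ℝ) 3) :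
    eLpNorm F 1 ≤ eLpNorm F (ENNReal.ofReal α) * ENNReal.ofReal 5 := by
  have hα0 : 0 < α := by linarith
  have hp1 : 1 ≤ ENNReal.ofReal α := by
    rw [← ENNReal.ofReal_one]; exact ENNReal.ofReal_le_ofReal hα
  have hpt : (ENNReal.ofReal α).toReal = α := ENNReal.toReal_ofReal hα0.le
  have h := eLpNorm_le_eLpNorm_mul_rpow_measure_univ (μ := volume.restrict (Icc (-2:ℝ) 3))
    hp1 hF.restrict
  rw [eLpNorm_restrict_eq_of_support_subset hsupp, eLpNorm_restrict_eq_of_support_subset hsupp, hpt,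
    Measure.restrict_apply_univ, Real.volume_Icc] at h
  refine h.trans (mul_le_mul' le_rfl ?_)
  rw [show (3:ℝ) - -2 = 5 by norm_num, ENNReal.ofReal_rpow_of_pos (by norm_num)]
  apply ENNReal.ofReal_le_ofReal
  have h1 : 0 < 1 / α := by positivity
  calc (5:ℝ) ^ (1 / (1:ℝ≥0∞).toReal - 1 / α) ≤ 5 ^ (1:ℝ) := by
        apply Real.rpow_le_rpow_of_exponent_le (by norm_num)
        rw [ENNReal.toReal_one]; linarith
    _ = 5 := Real.rpow_one 5

lemma lint_eq (F : ℝ → ℝ) : ∫⁻ x, ENNReal.ofReal |F x| = eLpNorm F 1 := by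
  rw [eLpNorm_one_eq_lintegral_enorm]
  refine lintegral_congr fun x => ?_
  rw [Real.enorm_eq_ofReal_abs]

set_option maxHeartbeats 1000000 in
lemma approx_weight {α : ℝ} (hα : 1 ≤ α) {w : ℝ → ℝ} (hw0 : ∀ x, 0 ≤ w x)
    (hws : ∀ x, x ∉ Icc (0:ℝ) 1 → w x = 0) (hwm : MemLp w (ENNReal.ofReal α)) {ε : ℝ} (hε : 0 < ε) :
    ∃ (W : ℝ → ℝ) (δ : ℝ), Reg W δ ∧ ∫⁻ x, ENNReal.ofReal |W x - w x| ≤ ENNReal.ofReal ε ∧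
      ∫⁻ x, ENNReal.ofReal |(|W x - w x| ^ α)| ≤ ENNReal.ofReal ε := by
  have hα0 : 0 < α := by linarith
  have hp1 : 1 ≤ ENNReal.ofReal α := by
    rw [← ENNReal.ofReal_one]; exact ENNReal.ofReal_le_ofReal hα
  have hp0 : ENNReal.ofReal α ≠ 0 := (ENNReal.ofReal_pos.2 hα0).ne'
  have hpt : (ENNReal.ofReal α).toReal = α := ENNReal.toReal_ofReal hα0.le
  set η := min (ε / 10) (1 / 2) with hη
  have hη0 : 0 < η := by rw [hη]; positivity
  have hη1 : η ≤ ε / 10 := min_le_left _ _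
  have hη2 : η ≤ 1 / 2 := min_le_right _ _
  obtain ⟨g, hg1, hg2, hg3⟩ := MemLp.exist_eLpNorm_sub_le ENNReal.ofReal_ne_top hp1 hwm hη0
  have hgn : Nice g := smooth_nice hg1 hg2
  obtain ⟨K, hK, hKb⟩ := hgn.bounded
  set k : ℝ → ℝ := fun x => min |g x| (K * cut (3 / 2) x) with hk
  have hk0 : ∀ x, 0 ≤ k x := fun x =>
    le_min (abs_nonneg _) (mul_nonneg hK.le (cut_nonneg _ _))
  have hkn : Nice k := by
    obtain ⟨L2, hL2⟩ := cut_smul_lip (3 / 2) K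
    obtain ⟨L3, hL3⟩ := hgn.lip
    have hL4 : LipschitzWith L3 fun x => |g x| := by
      refine LipschitzWith.of_dist_le_mul fun x y => ?_
      refine le_trans ?_ (hL3.dist_le_mul x y)
      rw [Real.dist_eq, Real.dist_eq]
      exact abs_abs_sub_abs_le_abs_sub _ _
    obtain ⟨R, hR, hs⟩ := (cut_smul_nice (ρ := 3 / 2) (by norm_num) K).supp
    refine ⟨⟨_, hL4.min hL2⟩, R, hR, fun x hx => ?_⟩
    have := hs x hx
    simp only [hk]
    rw [this]
    exact min_eq_right (abs_nonneg _)
  set δ := η / 5 with hδ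
  have hδ0 : 0 < δ := by rw [hδ]; positivity
  obtain ⟨W, hWdef⟩ : ∃ W : ℝ → ℝ, W = fun x => k x + δ * cut (5 / 2) x := ⟨_, rfl⟩
  have hdn := cut_smul_nice (ρ := 5 / 2) (by norm_num) δ
  have hWn : Nice W := by
    obtain ⟨L1, hL1⟩ := hkn.lip
    obtain ⟨L2, hL2⟩ := hdn.lip
    obtain ⟨R1, hR1, hs1⟩ := hkn.supp
    obtain ⟨R2, hR2, hs2⟩ := hdn.supp
    refine ⟨⟨_, by rw [hWdef]; exact hL1.add hL2⟩, max R1 R2, lt_max_of_lt_left hR1, fun x hx => ?_⟩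
    have h1 := hs1 x ((le_max_left _ _).trans_lt hx)
    have h2 := hs2 x ((le_max_right _ _).trans_lt hx)
    simp only [hWdef]
    rw [h1, h2, add_zero]
  have hReg : Reg W δ := by
    refine ⟨hWn, fun x => by rw [hWdef]; exact add_nonneg (hk0 x) (mul_nonneg hδ0.le (cut_nonneg _ _)), hδ0, fun x hx => ?_⟩
    simp only [hWdef]
    rw [cut_eq_one (by rw [abs_le]; constructor <;> linarith [hx.1, hx.2])]
    linarith [hk0 x]
  have hkw : ∀ x, ‖(fun x => k x - w x) x‖ ≤ ‖(w - g) x‖ := by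
    intro x
    simp only [Real.norm_eq_abs, Pi.sub_apply, hk]
    by_cases hx : x ∈ Icc (0:ℝ) 1
    · rw [cut_eq_one (by rw [abs_le]; constructor <;> linarith [hx.1, hx.2]), mul_one,
        min_eq_left (hKb x)]
      have := abs_abs_sub_abs_le_abs_sub (g x) (w x)
      rw [abs_of_nonneg (hw0 x)] at this
      rwa [abs_sub_comm (w x)]
    · rw [hws x hx, sub_zero, zero_sub, abs_neg, abs_of_nonneg (hk0 x)]
      exact min_le_left _ _
  have hwam : AEStronglyMeasurable w := hwm.1
  have hd : eLpNorm (fun x => δ * cut (5 / 2) x) (ENNReal.ofReal α) ≤ ENNReal.ofReal η := by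
    have h5 : 5 * δ = η := by rw [hδ]; ring
    rw [← h5]
    exact cut_norm hα hδ0
  have hkam : AEStronglyMeasurable (fun x => k x - w x) :=
    hkn.continuous.aestronglyMeasurable.sub hwam
  have hp : eLpNorm (fun x => W x - w x) (ENNReal.ofReal α) ≤ ENNReal.ofReal (2 * η) := by
    have e : (fun x => W x - w x) = (fun x => k x - w x) + fun x => δ * cut (5 / 2) x := by
      ext x; simp only [hWdef, Pi.add_apply]; ring
    rw [e]
    refine (eLpNorm_add_le hkam hdn.continuous.aestronglyMeasurable hp1).trans ?_
    rw [two_mul, ENNReal.ofReal_add hη0.le hη0.le]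
    exact add_le_add ((eLpNorm_mono hkw).trans hg3) hd
  have hsupp : Function.support (fun x => W x - w x) ⊆ Icc (-2:ℝ) 3 := by
    intro x hx
    by_contra h
    apply hx
    have h1 : cut (5 / 2) x = 0 := by
      apply cut_eq_zero
      rw [le_abs]
      by_contra h'
      push Not at h'
      exact h ⟨by linarith, by linarith⟩
    have h2 : cut (3 / 2) x = 0 := by
      apply cut_eq_zero
      rw [le_abs]
      by_contra h'
      push Not at h'
      exact h ⟨by linarith, by linarith⟩
    have h3 : w x = 0 := hws x fun h' => h ⟨by linarith [h'.1], by linarith [h'.2]⟩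
    simp only [hWdef, hk, h1, h2, h3, mul_zero, add_zero, sub_zero]
    exact min_eq_right (abs_nonneg _)
  have hWam : AEStronglyMeasurable (fun x => W x - w x) :=
    hWn.continuous.aestronglyMeasurable.sub hwam
  have hone := norm_one hα hWam hsupp
  refine ⟨W, δ, hReg, ?_, ?_⟩
  · rw [lint_eq fun x => W x - w x]
    refine hone.trans ((mul_le_mul' hp le_rfl).trans ?_)
    rw [← ENNReal.ofReal_mul (by positivity)]
    exact ENNReal.ofReal_le_ofReal (by linarith)
  · have h1 : ∫⁻ x, ENNReal.ofReal |(|W x - w x| ^ α)| =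
        eLpNorm (fun x => W x - w x) (ENNReal.ofReal α) ^ α := by
      rw [eLpNorm_eq_lintegral_rpow_enorm_toReal hp0 ENNReal.ofReal_ne_top, hpt, ← ENNReal.rpow_mul,
        one_div_mul_cancel hα0.ne', ENNReal.rpow_one]
      refine lintegral_congr fun x => ?_
      rw [Real.enorm_eq_ofReal_abs, ENNReal.ofReal_rpow_of_nonneg (abs_nonneg _) hα0.le,
        abs_of_nonneg (Real.rpow_nonneg (abs_nonneg _) _)]
    rw [h1]
    calc _ ≤ ENNReal.ofReal (2 * η) ^ α := by gcongr
      _ = ENNReal.ofReal ((2 * η) ^ α) := ENNReal.ofReal_rpow_of_pos (by positivity)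
      _ ≤ ENNReal.ofReal ε := by
          apply ENNReal.ofReal_le_ofReal
          calc (2 * η) ^ α ≤ (2 * η) ^ (1:ℝ) :=
                Real.rpow_le_rpow_of_exponent_ge (by positivity) (by linarith) hα
            _ ≤ ε := by rw [Real.rpow_one]; linarith

lemma weak_one {r A : ℝ} (hr1 : 1 < r) (hWT : WT r A) {f : ℝ → ℝ} (hf : Integrable f) {l : ℝ}
    (hl : 0 < l) :
    ENNReal.ofReal l * volume {x | l < |Hil f x|} ≤ ENNReal.ofReal A * ∫⁻ x, ENNReal.ofReal |f x| := by
  have hM : ∀ x, Mr r (fun _ => 1) x ≤ 1 := by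
    intro x
    unfold Mr
    calc _ ≤ (ENNReal.ofReal 1) ^ (1 / r) := by
          gcongr
          exact HLMax_le_const _ _ (fun y => by simp) x
      _ = 1 := by simp
  have hle : (∫⁻ x, ENNReal.ofReal |f x| * Mr r (fun _ => 1) x) ≤ ∫⁻ x, ENNReal.ofReal |f x| := by
    refine lintegral_mono fun x => ?_
    calc _ ≤ ENNReal.ofReal |f x| * 1 := mul_le_mul' le_rfl (hM x)
      _ = _ := mul_one _
  have hfin : (∫⁻ x, ENNReal.ofReal |f x|) < ⊤ := hf.abs.lintegral_lt_top
  have := hWT (fun _ => 1) f ⟨fun _ => zero_le_one, locallyIntegrable_const _⟩ (hle.trans_lt hfin) l hl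
  rw [ENNReal.ofReal_one, setLIntegral_one] at this
  exact this.trans (mul_le_mul' le_rfl hle)

/-- truncated integrals -/
def TR (f : ℝ → ℝ) (x ε : ℝ) : ℝ := ∫ y in {y : ℝ | ε < |x - y|}, f y / (x - y)

lemma TR_sub {f g : ℝ → ℝ} (hf : Integrable f) (hg : Integrable g) (x ε : ℝ) (hε : 0 < ε) :
    TR (fun y => f y - g y) x ε = TR f x ε - TR g x ε := by
  unfold TR
  rw [← integral_sub (kernel_integrable hf x ε hε) (kernel_integrable hg x ε hε)]
  congr 1
  ext y; ring

lemma TR_smul (t : ℝ) (f : ℝ → ℝ) (x ε : ℝ) : TR (fun y => t * f y) x ε = t * TR f x ε := by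
  unfold TR
  rw [← integral_const_mul]
  congr 1
  ext y; ring

/-- the value of the transform where the limit does not exist -/
def junk : ℝ := Classical.epsilon fun _ : ℝ => False

lemma Hil_junk {f : ℝ → ℝ} {x : ℝ} (h : ¬ ∃ L, Tendsto (TR f x) (𝓝[>] 0) (𝓝 L)) : Hil f x = junk := by
  unfold Hil limUnder lim junk
  congr 1
  ext L
  constructor
  · intro hL; exact h ⟨L, hL⟩
  · exact False.elim

lemma ae_good {r A : ℝ} (hr1 : 1 < r) (hWT : WT r A) {w : ℝ → ℝ} (hw : Integrable w) :
    ∀ᵐ x, (∃ L, Tendsto (TR w x) (𝓝[>] 0) (𝓝 L)) ∨ Hil w x = 0 := by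
  by_cases hj : junk = 0
  · refine Eventually.of_forall fun x => ?_
    by_cases h : ∃ L, Tendsto (TR w x) (𝓝[>] 0) (𝓝 L)
    · exact Or.inl h
    · right; rw [Hil_junk h, hj]
  set B := {x | ¬ ∃ L, Tendsto (TR w x) (𝓝[>] 0) (𝓝 L)} with hB
  have hl : 0 < |junk| / 2 := by have := abs_pos.2 hj; linarith
  have hfin : (∫⁻ x, ENNReal.ofReal |w x|) ≠ ⊤ := hw.abs.lintegral_lt_top.ne
  have hbd : ∀ n : ℕ, ENNReal.ofReal (|junk| / 2) * volume B ≤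
      ENNReal.ofReal A * (ENNReal.ofReal (1 / ((n:ℝ) + 1)) * ∫⁻ x, ENNReal.ofReal |w x|) := by
    intro n
    have ht : 0 < 1 / ((n:ℝ) + 1) := by positivity
    generalize 1 / ((n:ℝ) + 1) = t at ht
    have h := weak_one hr1 hWT (hw.const_mul t) hl
    have e : ∫⁻ x, ENNReal.ofReal |t * w x| = ENNReal.ofReal t * ∫⁻ x, ENNReal.ofReal |w x| := by
      rw [← lintegral_const_mul' _ _ ENNReal.ofReal_ne_top]
      refine lintegral_congr fun x => ?_
      rw [abs_mul, abs_of_pos ht, ENNReal.ofReal_mul ht.le]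
    rw [e] at h
    refine le_trans ?_ h
    gcongr
    intro x hx
    have hx' : ¬ ∃ L, Tendsto (TR (fun y => t * w y) x) (𝓝[>] 0) (𝓝 L) := by
      rintro ⟨L, hL⟩
      refine hx ⟨t⁻¹ * L, ?_⟩
      refine (hL.const_mul t⁻¹).congr fun ε => ?_
      rw [TR_smul]; field_simp
    show |junk| / 2 < |Hil (fun y => t * w y) x|
    rw [Hil_junk hx']
    linarith [abs_pos.2 hj]
  have hlim : Tendsto (fun n : ℕ => ENNReal.ofReal A * (ENNReal.ofReal (1 / ((n:ℝ) + 1)) *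
      ∫⁻ x, ENNReal.ofReal |w x|)) atTop (𝓝 (ENNReal.ofReal A * (ENNReal.ofReal 0 *
        ∫⁻ x, ENNReal.ofReal |w x|))) := by
    refine ENNReal.Tendsto.const_mul (ENNReal.Tendsto.mul_const ?_ (Or.inr hfin)) (Or.inr ENNReal.ofReal_ne_top)
    exact ENNReal.tendsto_ofReal tendsto_one_div_add_atTop_nhds_zero_nat
  have h0 := ge_of_tendsto' hlim hbd
  rw [ENNReal.ofReal_zero, zero_mul, mul_zero] at h0
  have hBz : volume B = 0 := by
    rcases mul_eq_zero.1 (le_antisymm h0 bot_le) with h | h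
    · exact absurd h (ENNReal.ofReal_pos.2 hl).ne'
    · exact h
  have := measure_eq_zero_iff_ae_notMem.1 hBz
  filter_upwards [this] with x hx
  left
  by_contra h
  exact hx h

lemma BC {S : ℕ → Set ℝ} {C : ℝ≥0∞} (hC : C ≠ ⊤)
    (h : ∀ n : ℕ, ENNReal.ofReal ((1 / 2) ^ n) * volume (S n) ≤ C * ENNReal.ofReal ((1 / 4) ^ n)) :
    ∀ᵐ x, ∀ᶠ n in atTop, x ∉ S n := by
  apply ae_eventually_notMem
  have h1 : ∀ n, volume (S n) ≤ C * ENNReal.ofReal ((1 / 2) ^ n) := by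
    intro n
    calc volume (S n) = ENNReal.ofReal (2 ^ n) * (ENNReal.ofReal ((1 / 2) ^ n) * volume (S n)) := by
          rw [← mul_assoc, ← ENNReal.ofReal_mul (by positivity), ← mul_pow]
          norm_num
      _ ≤ ENNReal.ofReal (2 ^ n) * (C * ENNReal.ofReal ((1 / 4) ^ n)) := mul_le_mul' le_rfl (h n)
      _ = C * (ENNReal.ofReal (2 ^ n) * ENNReal.ofReal ((1 / 4) ^ n)) := by ring
      _ = _ := by
          rw [← ENNReal.ofReal_mul (by positivity), ← mul_pow]
          norm_num
  refine ne_of_lt ((ENNReal.tsum_le_tsum h1).trans_lt ?_)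
  rw [ENNReal.tsum_mul_left]
  refine ENNReal.mul_lt_top hC.lt_top ?_
  rw [← ENNReal.ofReal_tsum_of_nonneg (fun n => by positivity)
    (summable_geometric_of_lt_one (by norm_num) (by norm_num))]
  exact ENNReal.ofReal_lt_top

lemma pt_lim {h : ℕ → ℝ} {h0 : ℝ} (hh : Tendsto h atTop (𝓝 h0)) {e M : ℕ → ℝ≥0∞} {m : ℝ≥0∞}
    (he : Tendsto e atTop (𝓝 0)) (hm : m ≠ 0) (hM : ∀ n, M n ≤ m + e n) {v : ℕ → ℝ} {v0 : ℝ}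
    (hv : Tendsto v atTop (𝓝 v0)) {α β : ℝ} (hα : 0 < α) (hβ : 0 < β) :
    (ENNReal.ofReal |h0| / m ^ β) ^ 2 * ENNReal.ofReal (v0 ^ α) ≤
      liminf (fun n => (ENNReal.ofReal |h n| / M n ^ β) ^ 2 * ENNReal.ofReal (v n ^ α)) atTop := by
  have hm' : m ^ β ≠ 0 := by
    intro h
    rcases ENNReal.rpow_eq_zero_iff.1 h with h | h
    · exact hm h.1
    · linarith [h.2]
  have h1 : Tendsto (fun n => ENNReal.ofReal |h n|) atTop (𝓝 (ENNReal.ofReal |h0|)) :=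
    ENNReal.tendsto_ofReal hh.abs
  have h2 : Tendsto (fun n => (m + e n) ^ β) atTop (𝓝 (m ^ β)) := by
    have h3 : Tendsto (fun n => m + e n) atTop (𝓝 m) := by
      simpa using tendsto_const_nhds.add he
    exact (ENNReal.continuous_rpow_const.tendsto m).comp h3
  have h4 : Tendsto (fun n => ENNReal.ofReal |h n| / (m + e n) ^ β) atTop
      (𝓝 (ENNReal.ofReal |h0| / m ^ β)) :=
    ENNReal.Tendsto.div h1 (Or.inr hm') h2 (Or.inr ENNReal.ofReal_ne_top)
  have h5 : Tendsto (fun n => (ENNReal.ofReal |h n| / (m + e n) ^ β) ^ 2) atTop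
      (𝓝 ((ENNReal.ofReal |h0| / m ^ β) ^ 2)) := ENNReal.Tendsto.pow h4
  have h6 : Tendsto (fun n => ENNReal.ofReal (v n ^ α)) atTop (𝓝 (ENNReal.ofReal (v0 ^ α))) :=
    ENNReal.tendsto_ofReal (hv.rpow_const (Or.inr hα.le))
  have hne : (ENNReal.ofReal |h0| / m ^ β) ^ 2 ≠ ⊤ :=
    ENNReal.pow_ne_top (ENNReal.div_ne_top ENNReal.ofReal_ne_top hm')
  have h7 := ENNReal.Tendsto.mul h5 (Or.inr ENNReal.ofReal_ne_top) h6 (Or.inr hne)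
  rw [← h7.liminf_eq]
  refine liminf_le_liminf (Eventually.of_forall fun n => ?_)
  refine mul_le_mul' (pow_le_pow_left₀ bot_le ?_ 2) le_rfl
  exact ENNReal.div_le_div le_rfl (ENNReal.rpow_le_rpow (hM n) hβ.le)

lemma limit_case {r A : ℝ} (hr1 : 1 < r) (hr2 : r < 2) (hA : 0 < A) (hWT : WT r A) {w : ℝ → ℝ}
    (hw0 : ∀ x, 0 ≤ w x) (hws : ∀ x, x ∉ Icc (0:ℝ) 1 → w x = 0) (hwi : Integrable w)
    (hwm : MemLp w (ENNReal.ofReal (r / (2 - r))))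
    (hpos : ∀ x ∈ Icc (0:ℝ) 1, Mr (r / (2 - r)) w x ≠ 0) :
    ∫⁻ x in Icc (0:ℝ) 1, (ENNReal.ofReal |Hil w x| / Mr (r / (2 - r)) w x ^ ((r / (2 - r)) / r)) ^ 2 *
      ENNReal.ofReal (w x ^ (r / (2 - r))) ≤
      ENNReal.ofReal (4096 * A ^ 2) * ∫⁻ x, ENNReal.ofReal (w x) := by
  have hα : 1 ≤ r / (2 - r) := by rw [le_div_iff₀ (by linarith)]; linarith
  have hE := fun {W : ℝ → ℝ} {δ : ℝ} (hW : Reg W δ) => lemE hr1 hr2 hA hWT hW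
  generalize r / (2 - r) = α at *
  have hα0 : 0 < α := by linarith
  have hβ : 0 < α / r := by apply div_pos <;> linarith
  have hq : ∀ n : ℕ, (0:ℝ) < (1 / 4) ^ n := fun n => by positivity
  choose W δ hR h1 h2 using fun n : ℕ => approx_weight hα hw0 hws hwm (hq n)
  have hWi : ∀ n, Integrable (W n) := fun n => (hR n).nice.integrable
  have b1 : ∀ᵐ x, ∀ᶠ n in atTop, x ∉ {x | (1 / 2 : ℝ) ^ n < |Hil (fun y => W n y - w y) x|} := by
    refine BC (C := ENNReal.ofReal A) ENNReal.ofReal_ne_top fun n => ?_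
    exact (weak_one hr1 hWT ((hWi n).sub hwi) (by positivity)).trans (mul_le_mul' le_rfl (h1 n))
  have b2 : ∀ᵐ x, ∀ᶠ n in atTop, x ∉ {x | ENNReal.ofReal ((1 / 2 : ℝ) ^ n) <
      HLMax (fun y => |W n y - w y| ^ α) x} := by
    refine BC (C := 2) (by simp) fun n => ?_
    exact (HLMax_weak _ _).trans (mul_le_mul' le_rfl (h2 n))
  have b3 : ∀ᵐ x, ∀ᶠ n in atTop, x ∉ {x | ENNReal.ofReal ((1 / 2 : ℝ) ^ n) ≤
      ENNReal.ofReal |W n x - w x|} := by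
    refine BC (C := 1) (by simp) fun n => ?_
    rw [one_mul]
    refine (mul_meas_ge_le_lintegral₀ ?_ _).trans (h1 n)
    exact (((hWi n).sub hwi).abs).aestronglyMeasurable.aemeasurable.ennreal_ofReal
  have hp : Tendsto (fun n : ℕ => (1 / 2 : ℝ) ^ n) atTop (𝓝 0) :=
    tendsto_pow_atTop_nhds_zero_of_lt_one (by norm_num) (by norm_num)
  have hpt : ∀ᵐ x, x ∈ Icc (0:ℝ) 1 → (ENNReal.ofReal |Hil w x| / Mr α w x ^ (α / r)) ^ 2 *
      ENNReal.ofReal (w x ^ α) ≤ liminf (fun n => (ENNReal.ofReal |H0 (W n) x| /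
        Mr α (W n) x ^ (α / r)) ^ 2 * ENNReal.ofReal (W n x ^ α)) atTop := by
    filter_upwards [b1, b2, b3, ae_good hr1 hWT hwi] with x c1 c2 c3 c4 hx
    rcases c4 with ⟨L, hL⟩ | h
    swap
    · rw [h, abs_zero, ENNReal.ofReal_zero, ENNReal.zero_div, zero_pow two_ne_zero, zero_mul]
      exact bot_le
    have hHL : Hil w x = L := Tendsto.limUnder_eq hL
    have hHd : ∀ n, Hil (fun y => W n y - w y) x = H0 (W n) x - L := by
      intro n
      refine Tendsto.limUnder_eq ?_
      refine Tendsto.congr' ?_ ((H0_tendsto (hR n).nice x).sub hL)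
      filter_upwards [self_mem_nhdsWithin] with ε hε
      exact (TR_sub (hWi n) hwi x ε hε).symm
    have t1 : Tendsto (fun n => H0 (W n) x) atTop (𝓝 (Hil w x)) := by
      rw [hHL, tendsto_iff_norm_sub_tendsto_zero]
      refine squeeze_zero' (Eventually.of_forall fun n => norm_nonneg _) ?_ hp
      filter_upwards [c1] with n hn
      rw [← hHd n]
      exact not_lt.1 hn
    have t2 : Tendsto (fun n => Mr α (fun y => W n y - w y) x) atTop (𝓝 0) := by
      have t : Tendsto (fun n => HLMax (fun y => |W n y - w y| ^ α) x) atTop (𝓝 0) := by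
        have hp' := ENNReal.tendsto_ofReal hp
        rw [ENNReal.ofReal_zero] at hp'
        refine tendsto_of_tendsto_of_tendsto_of_le_of_le' tendsto_const_nhds hp'
          (Eventually.of_forall fun n => bot_le) ?_
        filter_upwards [c2] with n hn
        exact not_lt.1 hn
      have := (ENNReal.continuous_rpow_const (y := 1 / α)).tendsto 0 |>.comp t
      rw [ENNReal.zero_rpow_of_pos (by positivity)] at this
      exact this
    have t3 : Tendsto (fun n => W n x) atTop (𝓝 (w x)) := by
      rw [tendsto_iff_norm_sub_tendsto_zero]
      refine squeeze_zero' (Eventually.of_forall fun n => norm_nonneg _) ?_ hp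
      filter_upwards [c3] with n hn
      have := not_le.1 hn
      exact ((ENNReal.ofReal_lt_ofReal_iff (by positivity)).1 this).le
    refine pt_lim t1 t2 (hpos x hx) (fun n => ?_) t3 hα0 hβ
    have e : W n = fun y => w y + (W n y - w y) := by ext y; ring
    have := Mr_add_le α hα w (fun y => W n y - w y) hwi.aestronglyMeasurable.aemeasurable
      ((hWi n).sub hwi).aestronglyMeasurable.aemeasurable x
    rw [← e] at this
    exact this
  have hmeas : ∀ n, Measurable fun x => (ENNReal.ofReal |H0 (W n) x| /
        Mr α (W n) x ^ (α / r)) ^ 2 * ENNReal.ofReal (W n x ^ α) := by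
    intro n
    have m1 : Measurable fun x => |H0 (W n) x| := (H0_measurable (hR n).nice).abs
    have m2 : Measurable (Mr α (W n)) := Mr_measurable _ _
    have m3 : Measurable (W n) := (hR n).nice.continuous.measurable
    exact ((m1.ennreal_ofReal.div (m2.pow_const _)).pow_const 2).mul (m3.pow_const _).ennreal_ofReal
  have hb : ∀ n, ∫⁻ x in Icc (0:ℝ) 1, (ENNReal.ofReal |H0 (W n) x| /
        Mr α (W n) x ^ (α / r)) ^ 2 * ENNReal.ofReal (W n x ^ α) ≤
      ENNReal.ofReal (4096 * A ^ 2) * ((∫⁻ x, ENNReal.ofReal (w x)) + ENNReal.ofReal ((1 / 4) ^ n)) := by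
    intro n
    refine (hE (hR n)).trans (mul_le_mul' le_rfl ?_)
    calc ∫⁻ x, ENNReal.ofReal (W n x) ≤ ∫⁻ x, (ENNReal.ofReal (w x) + ENNReal.ofReal |W n x - w x|) := by
          refine lintegral_mono fun x => ?_
          rw [← ENNReal.ofReal_add (hw0 x) (abs_nonneg _)]
          apply ENNReal.ofReal_le_ofReal
          linarith [le_abs_self (W n x - w x)]
      _ = (∫⁻ x, ENNReal.ofReal (w x)) + ∫⁻ x, ENNReal.ofReal |W n x - w x| :=
          lintegral_add_left' hwi.aestronglyMeasurable.aemeasurable.ennreal_ofReal _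
      _ ≤ _ := by
          refine add_le_add le_rfl (h1 n)
  have hlim : Tendsto (fun n : ℕ => ENNReal.ofReal (4096 * A ^ 2) *
      ((∫⁻ x, ENNReal.ofReal (w x)) + ENNReal.ofReal ((1 / 4) ^ n))) atTop
      (𝓝 (ENNReal.ofReal (4096 * A ^ 2) * ((∫⁻ x, ENNReal.ofReal (w x)) + ENNReal.ofReal 0))) := by
    refine ENNReal.Tendsto.const_mul (tendsto_const_nhds.add (ENNReal.tendsto_ofReal ?_))
      (Or.inr ENNReal.ofReal_ne_top)
    exact tendsto_pow_atTop_nhds_zero_of_lt_one (by norm_num) (by norm_num)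
  rw [ENNReal.ofReal_zero, add_zero] at hlim
  refine (lintegral_mono_ae ((ae_restrict_iff' measurableSet_Icc).2 hpt)).trans ?_
  refine (lintegral_liminf_le hmeas).trans ?_
  rw [← hlim.liminf_eq]
  exact liminf_le_liminf (Eventually.of_forall hb)

lemma avg_le {α : ℝ} (w : ℝ → ℝ) {x : ℝ} (hx : x ∈ Icc (0:ℝ) 1) :
    (ENNReal.ofReal 3)⁻¹ * ∫⁻ y in Ioo (-1:ℝ) 2, ENNReal.ofReal |(|w y| ^ α)| ≤
      HLMax (fun y => |w y| ^ α) x := by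
  unfold HLMax
  refine le_iSup₂_of_le (-1) 2 (le_iSup₂_of_le (by norm_num) ⟨by linarith [hx.1], by linarith [hx.2]⟩ ?_)
  rw [show (2:ℝ) - -1 = 3 by norm_num]

lemma final {r A : ℝ} (hr1 : 1 < r) (hr2 : r < 2) (hA : 0 < A) (hWT : WT r A) {w : ℝ → ℝ}
    (hw : IsWeight w) (hws : ∀ x, x ∉ Icc (0:ℝ) 1 → w x = 0) :
    ∫⁻ x in Icc (0:ℝ) 1, (ENNReal.ofReal |Hil w x| / Mr (r / (2 - r)) w x ^ ((r / (2 - r)) / r)) ^ 2 *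
      ENNReal.ofReal (w x ^ (r / (2 - r))) ≤
      ENNReal.ofReal (4096 * A ^ 2) * ∫⁻ x in Icc (0:ℝ) 1, ENNReal.ofReal (w x) := by
  have hα : 1 ≤ r / (2 - r) := by rw [le_div_iff₀ (by linarith)]; linarith
  have hα0 : 0 < r / (2 - r) := by linarith
  have hβ : 0 < r / (2 - r) / r := by apply div_pos <;> linarith
  have hwi : Integrable w := by
    rw [← integrableOn_iff_integrable_of_support_subset (s := Icc (0:ℝ) 1)]
    · exact hw.2.integrableOn_isCompact isCompact_Icc
    · intro x hx
      by_contra h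
      exact hx (hws x h)
  have hwam : AEStronglyMeasurable w := hwi.aestronglyMeasurable
  have e0 : ∫⁻ x in Icc (0:ℝ) 1, ENNReal.ofReal (w x) = ∫⁻ x, ENNReal.ofReal (w x) := by
    rw [← lintegral_indicator measurableSet_Icc]
    refine lintegral_congr fun x => ?_
    by_cases hx : x ∈ Icc (0:ℝ) 1
    · rw [indicator_of_mem hx]
    · rw [indicator_of_notMem hx, hws x hx, ENNReal.ofReal_zero]
  rw [e0]
  have e1 : ∫⁻ x in Ioo (-1:ℝ) 2, ENNReal.ofReal |(|w x| ^ (r / (2 - r)))| =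
      ∫⁻ x, ENNReal.ofReal |(|w x| ^ (r / (2 - r)))| := by
    rw [← lintegral_indicator measurableSet_Ioo]
    refine lintegral_congr fun x => ?_
    by_cases hx : x ∈ Ioo (-1:ℝ) 2
    · rw [indicator_of_mem hx]
    · rw [indicator_of_notMem hx, hws x fun h => hx ⟨by linarith [h.1], by linarith [h.2]⟩, abs_zero,
        Real.zero_rpow hα0.ne', abs_zero, ENNReal.ofReal_zero]
  have hav := fun {x : ℝ} (hx : x ∈ Icc (0:ℝ) 1) => avg_le (α := r / (2 - r)) w hx
  rw [e1] at hav
  have hm : AEMeasurable fun x => ENNReal.ofReal |(|w x| ^ (r / (2 - r)))| :=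
    ((hwam.aemeasurable.abs.pow_const _).abs).ennreal_ofReal
  by_cases htop : ∫⁻ x, ENNReal.ofReal |(|w x| ^ (r / (2 - r)))| = ⊤
  · refine le_of_eq_of_le ?_ bot_le
    refine (setLIntegral_congr_fun (g := fun _ => 0) measurableSet_Icc fun x hx => ?_).trans (by simp)
    have h1 := hav hx
    rw [htop, ENNReal.mul_top (by simp)] at h1
    have h2 : Mr (r / (2 - r)) w x = ⊤ := by
      unfold Mr
      rw [top_le_iff.1 h1, ENNReal.top_rpow_of_pos (by positivity)]
    simp only [h2]
    rw [ENNReal.top_rpow_of_pos hβ, ENNReal.div_top]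
    simp
  by_cases hz : ∫⁻ x, ENNReal.ofReal |(|w x| ^ (r / (2 - r)))| = 0
  · refine le_of_eq_of_le ?_ bot_le
    rw [lintegral_eq_zero_iff' hm] at hz
    have : ∀ᵐ x, x ∈ Icc (0:ℝ) 1 →
        (ENNReal.ofReal |Hil w x| / Mr (r / (2 - r)) w x ^ ((r / (2 - r)) / r)) ^ 2 *
      ENNReal.ofReal (w x ^ (r / (2 - r))) = 0 := by
      filter_upwards [hz] with x hx _
      have h1 : ENNReal.ofReal |(|w x| ^ (r / (2 - r)))| = 0 := hx
      rw [abs_of_nonneg (hw.1 x), abs_of_nonneg (Real.rpow_nonneg (hw.1 x) _)] at h1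
      rw [h1, mul_zero]
    refine (setLIntegral_congr_fun_ae measurableSet_Icc this).trans (by simp)
  refine limit_case hr1 hr2 hA hWT hw.1 hws hwi ⟨hwam, ?_⟩ fun x hx => ?_
  · rw [eLpNorm_lt_top_iff_lintegral_rpow_enorm_lt_top (ENNReal.ofReal_pos.2 hα0).ne'
      ENNReal.ofReal_ne_top, ENNReal.toReal_ofReal hα0.le, lt_top_iff_ne_top]
    refine fun h => htop (Eq.trans (lintegral_congr fun x => ?_) h)
    rw [Real.enorm_eq_ofReal_abs, ENNReal.ofReal_rpow_of_nonneg (abs_nonneg _) hα0.le,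
        abs_of_nonneg (Real.rpow_nonneg (abs_nonneg _) _)]
  · unfold Mr
    intro h
    rcases ENNReal.rpow_eq_zero_iff.1 h with h | h
    · have h1 := hav hx
      rw [h.1] at h1
      rcases mul_eq_zero.1 (le_antisymm h1 bot_le) with h | h
      · exact absurd h (by simp)
      · exact hz h
    · have : 0 < 1 / (r / (2 - r)) := by positivity
      linarith [h.2]

/-- **Lemma 3.1, extrapolation.** Assume for `1 < r < 2` the weak
type bound `λ w({|Hf| > λ}) ≤ A_r ∫ |f| M_r w` for all weights `w` and all `f`
with `∫ |f| M_r w < ∞`. With `α_r = r/(2−r)`, there is an absolute constant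
`c > 0` (independent of `r`) such that for every weight `w` supported in
`[0,1]`, `∫_0^1 (|Hw|/(M_{α_r} w)^{α_r/r})^2 w^{α_r} ≤ c A_r^2 ∫_0^1 w`. -/
theorem statement7 :
    ∃ c : ℝ, 0 < c ∧ ∀ r A : ℝ, 1 < r → r < 2 → 0 < A →
      (∀ w f : ℝ → ℝ, IsWeight w →
          (∫⁻ x, ENNReal.ofReal |f x| * Mr r w x) < ⊤ →
          ∀ lam : ℝ, 0 < lam →
            ENNReal.ofReal lam *
                (∫⁻ x in {x : ℝ | lam < |Hil f x|}, ENNReal.ofReal (w x))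
              ≤ ENNReal.ofReal A * ∫⁻ x, ENNReal.ofReal |f x| * Mr r w x) →
      ∀ w : ℝ → ℝ, IsWeight w → (∀ x : ℝ, x ∉ Icc (0:ℝ) 1 → w x = 0) →
        (∫⁻ x in Icc (0:ℝ) 1,
            (ENNReal.ofReal |Hil w x| /
                Mr (r / (2 - r)) w x ^ ((r / (2 - r)) / r)) ^ 2 *
              ENNReal.ofReal (w x ^ (r / (2 - r))))
          ≤ ENNReal.ofReal (c * A ^ 2) *
              ∫⁻ x in Icc (0:ℝ) 1, ENNReal.ofReal (w x) := by
  refine ⟨4096, by norm_num, fun r A hr1 hr2 hA hWT w hw hws => ?_⟩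
  exact final hr1 hr2 hA hWT hw hws

end RT

end
end
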